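/- arXiv:2212.05835 — 6 statements merged into one kernel-verified Lean document; each statement's English description precedes it below -/
import Mathlib

section
/- Let n ≥ 1, γ ∈ (0,1], M ≥ 0, and u₀, f₁, f₋₁ ∈ ℂⁿ. Let u : (−∞,0]×I → ℂⁿ be continuous, and define u^disk on the punctured closed unit disk by u(s,t) = u^disk(e^{2π(s+it)}). Assume that |u^disk(z) − u₀ − f₁·z − f₋₁·conj(z)| ≤ M·|z|^{1+γ} for all 0 < |z| ≤ 1 (scalar multiplication of vectors in ℂⁿ by complex numbers taken componentwise). Then for every s ≤ 0 one has |e^{−2πs}·c₁(s) − f₁| ≤ M·e^{2πγs}, where c₁(s) := ∫₀¹ u(s,t)e^{−2πit} dt is the first Fourier coefficient of u at s. (Paper's Lemma 2.1: the first Fourier coefficient recovers the complex-linear derivative of the disk map at the puncture.) -/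
open MeasureTheory Real

noncomputable section

/-!
With `z = e^{2π(s+it)}` on the circle of radius `r = e^{2πs}` one has `r⁻¹ e^{-2πit} = z⁻¹`, so
`e^{-2πs} c₁(s)` is the average of `z⁻¹ • u(z)` over that circle. For the real-affine map
`u₀ + z f₁ + z̄ f₋₁` in place of `u` this average is exactly `f₁`, because `z⁻¹` and
`z⁻¹ z̄ = r² z⁻²` average to zero. Hence the error is the average of `z⁻¹` times the Taylor
remainder, of norm at most `r⁻¹ M r^{1+γ}`.
-/

open Metric

section CircleAverage

theorem inv_mul_conj_eq_of_mem_sphere {z : ℂ} {R : ℝ} (hz : z ∈ sphere 0 R) :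
    z⁻¹ * starRingEnd ℂ z = (R : ℂ) ^ 2 * z ^ (-2 : ℤ) := by
  rw [← mem_sphere_zero_iff_norm.1 hz, ← Complex.mul_conj']
  obtain rfl | hz0 := eq_or_ne z 0
  · simp
  · field_simp

variable {E : Type*} [NormedAddCommGroup E]

theorem circleAverage_eq_integral_zero_one [NormedSpace ℝ E] (f : ℂ → E) (c : ℂ) (R : ℝ) :
    circleAverage f c R = ∫ t in (0 : ℝ)..1, f (circleMap c R (2 * π * t)) := by
  rw [intervalIntegral.integral_comp_mul_left (fun θ ↦ f (circleMap c R θ)) two_pi_pos.ne',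
    mul_zero, mul_one, circleAverage_def]

theorem norm_circleAverage_le_of_norm_le_const [NormedSpace ℝ E] {f : ℂ → E} {c : ℂ} {R C : ℝ}
    (hf : ∀ z ∈ sphere c |R|, ‖f z‖ ≤ C) : ‖circleAverage f c R‖ ≤ C := by
  rw [circleAverage_eq_integral_zero_one]
  simpa using intervalIntegral.norm_integral_le_of_norm_le_const (a := 0) (b := 1)
    fun t _ ↦ hf _ (circleMap_mem_sphere' c R (2 * π * t))

theorem circleAverage_sub_center_zpow {m : ℤ} (hm : m ≠ 0) (c : ℂ) (R : ℝ) :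
    circleAverage (fun z ↦ (z - c) ^ m) c R = 0 := by
  obtain rfl | hR := eq_or_ne R 0
  · simp [zero_zpow m hm]
  have hpow : Set.EqOn (fun z ↦ (z - c)⁻¹ • (z - c) ^ m) (fun z ↦ (z - c) ^ (m - 1))
      (sphere c |R|) := fun z hz ↦ by
    have hzc : z - c ≠ 0 := sub_ne_zero.2 (ne_of_mem_sphere hz (abs_ne_zero.2 hR))
    simp only [zpow_sub_one₀ hzc, smul_eq_mul, mul_comm]
  rw [← circleAverage_abs_radius, circleAverage_eq_circleIntegral (abs_ne_zero.2 hR),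
    circleIntegral.integral_congr (abs_nonneg R) hpow,
    circleIntegral.integral_sub_zpow_of_ne (by lia), smul_zero]

variable [NormedSpace ℂ E] [CompleteSpace E]

theorem circleAverage_smul_const (f : ℂ → ℂ) (v : E) (c : ℂ) (R : ℝ) :
    circleAverage (fun z ↦ f z • v) c R = circleAverage f c R • v := by
  rw [circleAverage_def, circleAverage_def, intervalIntegral.integral_smul_const, smul_assoc]

theorem circleAverage_inv_smul_affine {R : ℝ} (hR : 0 < R) (a b b' : E) :
    circleAverage (fun z ↦ z⁻¹ • (a + z • b + starRingEnd ℂ z • b')) 0 R = b := by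
  have hmean : ∀ (m : ℤ) (v : E), m ≠ 0 → circleAverage (fun z ↦ z ^ m • v) 0 R = 0 :=
    fun m v hm ↦ by
      simpa [circleAverage_smul_const] using
        congrArg (· • v) (circleAverage_sub_center_zpow hm 0 R)
  have hexpand : Set.EqOn (fun z ↦ z⁻¹ • (a + z • b + starRingEnd ℂ z • b'))
      (fun z ↦ z ^ (-1 : ℤ) • a + b + z ^ (-2 : ℤ) • (R : ℂ) ^ 2 • b') (sphere 0 |R|) := by
    intro z hz
    have hz0 : z ≠ 0 := ne_of_mem_sphere hz (abs_pos.2 hR.ne').ne'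
    rw [abs_of_pos hR] at hz
    simp only [smul_add, smul_smul, inv_mul_cancel₀ hz0, inv_mul_conj_eq_of_mem_sphere hz,
      zpow_neg_one, one_smul, mul_comm]
  have hint : ∀ (m : ℤ) (v : E), CircleIntegrable (fun z ↦ z ^ m • v) 0 R := fun m v ↦
    ContinuousOn.circleIntegrable hR.le fun z hz ↦
      ((continuousAt_zpow₀ z m (.inl (ne_of_mem_sphere hz hR.ne'))).smul
        continuousAt_const).continuousWithinAt
  rw [circleAverage_congr_sphere hexpand,
    circleAverage_fun_add ((hint _ _).fun_add (circleIntegrable_const b 0 R)) (hint _ _),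
    circleAverage_fun_add (hint _ _) (circleIntegrable_const b 0 R), circleAverage_const,
    hmean _ _ (by decide), hmean _ _ (by decide), zero_add, add_zero]

theorem norm_circleAverage_inv_smul_sub_le {u : ℂ → E} {R C : ℝ} (hR : 0 < R)
    (hu : ContinuousOn u (sphere 0 R)) (a b b' : E)
    (hC : ∀ z ∈ sphere 0 R, ‖u z - a - z • b - starRingEnd ℂ z • b'‖ ≤ C) :
    ‖circleAverage (fun z ↦ z⁻¹ • u z) 0 R - b‖ ≤ R⁻¹ * C := by
  have hinv : ContinuousOn (fun z : ℂ ↦ z⁻¹) (sphere 0 R) :=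
    continuousOn_id.inv₀ fun z hz ↦ ne_of_mem_sphere hz hR.ne'
  have hu_int : CircleIntegrable (fun z ↦ z⁻¹ • u z) 0 R :=
    (hinv.smul hu).circleIntegrable hR.le
  have haffine_int :
      CircleIntegrable (fun z ↦ z⁻¹ • (a + z • b + starRingEnd ℂ z • b')) 0 R :=
    (hinv.smul (by fun_prop)).circleIntegrable hR.le
  nth_rw 1 [← circleAverage_inv_smul_affine hR a b b', ← circleAverage_fun_sub hu_int haffine_int]
  refine norm_circleAverage_le_of_norm_le_const fun z hz ↦ ?_
  rw [abs_of_pos hR] at hz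
  rw [← smul_sub, norm_smul, norm_inv, mem_sphere_zero_iff_norm.1 hz, ← sub_sub, ← sub_sub]
  exact mul_le_mul_of_nonneg_left (hC z hz) (inv_nonneg.2 hR.le)

end CircleAverage

section Cylinder

variable {E : Type*} [NormedAddCommGroup E] [NormedSpace ℂ E]

theorem exp_neg_smul_firstFourierCoeff_eq_circleAverage (u : ℂ → E) (s : ℝ) :
    Real.exp (-(2 * π * s)) •
        (∫ t in (0:ℝ)..1,
          Complex.exp (-(((2 * π * t : ℝ) : ℂ) * Complex.I)) •
            u (Complex.exp (((2 * π * s : ℝ) : ℂ) + ((2 * π * t : ℝ) : ℂ) * Complex.I))) =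
      circleAverage (fun z ↦ z⁻¹ • u z) 0 (Real.exp (2 * π * s)) := by
  rw [circleAverage_eq_integral_zero_one, ← intervalIntegral.integral_smul]
  congr 1 with t
  have hz : circleMap 0 (Real.exp (2 * π * s)) (2 * π * t) =
      Complex.exp (((2 * π * s : ℝ) : ℂ) + ((2 * π * t : ℝ) : ℂ) * Complex.I) := by
    rw [circleMap_zero, Complex.ofReal_exp, Complex.exp_add]
  rw [hz, ← Complex.coe_smul, smul_smul, Complex.ofReal_exp, ← Complex.exp_add, ← Complex.exp_neg,
    neg_add, Complex.ofReal_neg]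

theorem stmt_0_general [CompleteSpace E] (γ M : ℝ) (u₀ f₁ fm₁ : E) (udisk : ℂ → E)
    (hcont : ContinuousOn udisk {z : ℂ | 0 < ‖z‖ ∧ ‖z‖ ≤ 1})
    (hTaylor : ∀ z : ℂ, 0 < ‖z‖ → ‖z‖ ≤ 1 →
      ‖udisk z - u₀ - z • f₁ - (starRingEnd ℂ z) • fm₁‖ ≤ M * ‖z‖ ^ (1 + γ))
    (s : ℝ) (hs : s ≤ 0) :
    ‖Real.exp (-(2 * π * s)) •
        (∫ t in (0:ℝ)..1,
          Complex.exp (-(((2 * π * t : ℝ) : ℂ) * Complex.I)) •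
            udisk (Complex.exp (((2 * π * s : ℝ) : ℂ) + ((2 * π * t : ℝ) : ℂ) * Complex.I)))
      - f₁‖ ≤ M * Real.exp (2 * π * γ * s) := by
  rw [exp_neg_smul_firstFourierCoeff_eq_circleAverage]
  set r := Real.exp (2 * π * s) with hr
  have hr0 : 0 < r := Real.exp_pos _
  have hr1 : r ≤ 1 := Real.exp_le_one_iff.2 (mul_nonpos_of_nonneg_of_nonpos two_pi_pos.le hs)
  have hsphere : ∀ z ∈ sphere (0 : ℂ) r, 0 < ‖z‖ ∧ ‖z‖ ≤ 1 := fun z hz ↦ by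
    rw [mem_sphere_zero_iff_norm.1 hz]
    exact ⟨hr0, hr1⟩
  have hremainder : ∀ z ∈ sphere (0 : ℂ) r,
      ‖udisk z - u₀ - z • f₁ - starRingEnd ℂ z • fm₁‖ ≤ M * r ^ (1 + γ) := fun z hz ↦ by
    simpa only [mem_sphere_zero_iff_norm.1 hz] using
      hTaylor z (hsphere z hz).1 (hsphere z hz).2
  calc ‖circleAverage (fun z ↦ z⁻¹ • udisk z) 0 r - f₁‖
      ≤ r⁻¹ * (M * r ^ (1 + γ)) :=
        norm_circleAverage_inv_smul_sub_le hr0 (hcont.mono hsphere) u₀ f₁ fm₁ hremainder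
    _ = M * r ^ γ := by rw [rpow_add hr0, rpow_one]; field_simp
    _ = M * Real.exp (2 * π * γ * s) := by rw [hr, ← Real.exp_mul, mul_right_comm]

end Cylinder

theorem stmt_0 (n : ℕ) (hn : 1 ≤ n) (γ M : ℝ) (hγ0 : 0 < γ) (hγ1 : γ ≤ 1) (hM : 0 ≤ M)
    (u₀ f₁ fm₁ : EuclideanSpace ℂ (Fin n))
    (udisk : ℂ → EuclideanSpace ℂ (Fin n))
    (hcont : ContinuousOn udisk {z : ℂ | 0 < ‖z‖ ∧ ‖z‖ ≤ 1})
    (hTaylor : ∀ z : ℂ, 0 < ‖z‖ → ‖z‖ ≤ 1 →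
      ‖udisk z - u₀ - z • f₁ - (starRingEnd ℂ z) • fm₁‖ ≤ M * ‖z‖ ^ (1 + γ))
    (s : ℝ) (hs : s ≤ 0) :
    ‖Real.exp (-(2 * π * s)) •
        (∫ t in (0:ℝ)..1,
          Complex.exp (-(((2 * π * t : ℝ) : ℂ) * Complex.I)) •
            udisk (Complex.exp (((2 * π * s : ℝ) : ℂ) + ((2 * π * t : ℝ) : ℂ) * Complex.I)))
      - f₁‖ ≤ M * Real.exp (2 * π * γ * s) :=
  stmt_0_general γ M u₀ f₁ fm₁ udisk hcont hTaylor s hs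
end
end

section
/- For every C¹ map v : [0,1]×I → ℂⁿ one has |h₁(0) − e^{−2π}h₁(1)| ≤ 2‖∂̄v|_{[0,1]×I}‖₀, where h₁(s) := ∫₀¹ v(s,t)e^{−2πit} dt. Consequently, if v_α : [−ρ_α,ρ_α]×I → ℂⁿ is a sequence of C¹ maps (ρ_α ≥ 1) with e^{2πρ_α}‖∂̄v_α|_{[−1,1]×I}‖₀ → 0, then e^{2πρ_α}|h_{α,1}(0) − e^{−2π}h_{α,1}(1)| → 0, i.e., h_{α,1}(0) = e^{−2π}h_{α,1}(1) + o(e^{−2πρ_α}). (Paper's Lemma 4.2, cut-off decay controls the first Fourier coefficient across the middle of the neck.) -/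
open MeasureTheory Real Set Filter

noncomputable section

abbrev Cn (n : ℕ) := EuclideanSpace ℂ (Fin n)

/-- Partial derivative in the `s`-direction. -/
def pdS {E : Type*} [NormedAddCommGroup E] [NormedSpace ℝ E] (f : ℝ × ℝ → E) (p : ℝ × ℝ) : E :=
  fderiv ℝ f p (1, 0)

/-- Partial derivative in the `t`-direction. -/
def pdT {E : Type*} [NormedAddCommGroup E] [NormedSpace ℝ E] (f : ℝ × ℝ → E) (p : ℝ × ℝ) : E :=
  fderiv ℝ f p (0, 1)

/-- The standard ∂̄-operator: ∂̄f = (1/2)(∂_s f + i ∂_t f). -/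
def dbar {E : Type*} [NormedAddCommGroup E] [NormedSpace ℂ E] (f : ℝ × ℝ → E) (p : ℝ × ℝ) : E :=
  (2⁻¹ : ℝ) • (pdS f p + Complex.I • pdT f p)

/-- `cexp s t = e^{2π(s+it)}`. -/
def cexp (s t : ℝ) : ℂ :=
  Complex.exp (((2 * π * s : ℝ) : ℂ) + ((2 * π * t : ℝ) : ℂ) * Complex.I)

/-- The `m`-th Fourier coefficient of `f` at `s`. -/
def fCoef {n : ℕ} (f : ℝ × ℝ → Cn n) (m : ℤ) (s : ℝ) : Cn n :=
  ∫ t in (0:ℝ)..1, Complex.exp (-(((2 * π * (m:ℝ) * t : ℝ) : ℂ) * Complex.I)) • f (s, t)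

/-- Unweighted Sobolev `k`-norm of `f` over `U`. -/
def sobNorm {E : Type*} [NormedAddCommGroup E] [NormedSpace ℝ E] (k : ℕ)
    (f : ℝ × ℝ → E) (U : Set (ℝ × ℝ)) : ℝ :=
  Real.sqrt (∫ p in U, ∑ j ∈ Finset.range (k + 1), ‖iteratedFDeriv ℝ j f p‖ ^ 2)

/-- Weighted Sobolev `(k,δ)`-norm of `f` over `U` with weight `e^{2δ|s|}`. -/
def sobNormW {E : Type*} [NormedAddCommGroup E] [NormedSpace ℝ E] (k : ℕ) (δ : ℝ)
    (f : ℝ × ℝ → E) (U : Set (ℝ × ℝ)) : ℝ :=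
  Real.sqrt (∫ p in U,
    (∑ j ∈ Finset.range (k + 1), ‖iteratedFDeriv ℝ j f p‖ ^ 2) * Real.exp (2 * δ * |p.1|))

/-- Hat-norm: weighted Sobolev `(k,δ)`-norm with weight `e^{2δ(r−|s|)}` (big in the middle). -/
def hatNorm {E : Type*} [NormedAddCommGroup E] [NormedSpace ℝ E] (k : ℕ) (δ r : ℝ)
    (f : ℝ × ℝ → E) (U : Set (ℝ × ℝ)) : ℝ :=
  Real.sqrt (∫ p in U,
    (∑ j ∈ Finset.range (k + 1), ‖iteratedFDeriv ℝ j f p‖ ^ 2) * Real.exp (2 * δ * (r - |p.1|)))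

/-!
The function `e^{-2πm(s - a + it)}` is holomorphic and `1`-periodic in `t`, so multiplication by it
commutes with `∂̄`. The divergence theorem for `e^{-2πm(s - a + it)} v` on `[a, b] × I`, where the
sides `t = 0` and `t = 1` cancel, expresses `e^{-2πm(b - a)} h_m(b) - h_m(a)` as
`2 ∫ e^{-2πm(s - a + it)} ∂̄v`. For `m ≥ 0` the weight has modulus at most one, and Cauchy–Schwarz
bounds the integral by the `L²` norm of `∂̄v`.
-/

theorem integral_norm_le_sqrt_measureReal_mul_sqrt_integral_sq {α F : Type*} [MeasurableSpace α]
    [NormedAddCommGroup F] {μ : Measure α} [IsFiniteMeasure μ] {f : α → F} (hf : MemLp f 2 μ) :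
    ∫ x, ‖f x‖ ∂μ ≤ √(μ.real univ) * √(∫ x, ‖f x‖ ^ 2 ∂μ) := by
  have holder := integral_mul_norm_le_Lp_mul_Lq (μ := μ) Real.HolderConjugate.two_two
    (f := fun _ ↦ (1 : ℝ)) (g := fun x ↦ ‖f x‖) (memLp_const 1) (by simpa using hf.norm)
  simpa [Real.sqrt_eq_rpow] using holder

variable {E : Type*} [NormedAddCommGroup E] [NormedSpace ℂ E]

/-- The `m`-th Fourier coefficient of the circle `t ↦ f (s, t)`, for values in any complex normed
space. For `E = Cn n` it is `fCoef` by definition. -/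
def sliceFourierCoeff (f : ℝ × ℝ → E) (m : ℤ) (s : ℝ) : E :=
  ∫ t in (0 : ℝ)..1, Complex.exp (-(((2 * π * (m : ℝ) * t : ℝ) : ℂ) * Complex.I)) • f (s, t)

/-- The function `e^{-2πm(s - a + it)}` on the cylinder. It is holomorphic in `s + it`, has modulus
one on the circle `s = a`, and pairs with `f` on each circle to give the `m`-th Fourier coefficient
up to a real factor. -/
def decayingMode (m : ℤ) (a : ℝ) (p : ℝ × ℝ) : ℂ :=
  Complex.exp (-(2 * π * m) * (Complex.equivRealProdCLM.symm p - a))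

theorem dbar_eq_complex_smul (f : ℝ × ℝ → E) (p : ℝ × ℝ) :
    dbar f p = (2⁻¹ : ℂ) • (pdS f p + Complex.I • pdT f p) := by
  rw [dbar, ← Complex.coe_smul, Complex.ofReal_inv, Complex.ofReal_ofNat]

theorem continuous_dbar {f : ℝ × ℝ → E} (hf : ContDiff ℝ 1 f) : Continuous (dbar f) := by
  have := hf.continuous_fderiv one_ne_zero
  unfold dbar pdS pdT
  fun_prop

theorem integrableOn_norm_dbar_sq {f : ℝ × ℝ → E} (hf : ContDiff ℝ 1 f) {K : Set (ℝ × ℝ)}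
    (hK : IsCompact K) : IntegrableOn (fun p ↦ ‖dbar f p‖ ^ 2) K :=
  ((continuous_dbar hf).norm.pow 2).continuousOn.integrableOn_compact hK

theorem dbar_smul {g : ℝ × ℝ → ℂ} {f : ℝ × ℝ → E} {p : ℝ × ℝ} (hg : DifferentiableAt ℝ g p)
    (hf : DifferentiableAt ℝ f p) :
    dbar (fun q ↦ g q • f q) p = g p • dbar f p + dbar g p • f p := by
  simp only [dbar_eq_complex_smul, pdS, pdT, fderiv_fun_smul hg hf, add_apply, smul_apply,
    ContinuousLinearMap.smulRight_apply, smul_eq_mul]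
  module

theorem dbar_comp_equivRealProdCLM_symm {F : ℂ → E} {p : ℝ × ℝ}
    (hF : DifferentiableAt ℂ F (Complex.equivRealProdCLM.symm p)) :
    dbar (F ∘ Complex.equivRealProdCLM.symm) p = 0 := by
  have chain := (hF.hasFDerivAt.restrictScalars ℝ).comp p
    Complex.equivRealProdCLM.symm.hasFDerivAt
  have hpdS : pdS (F ∘ Complex.equivRealProdCLM.symm) p =
      deriv F (Complex.equivRealProdCLM.symm p) := by
    simp [pdS, chain.fderiv, Complex.equivRealProdCLM_symm_apply (1, 0)]
  have hpdT : pdT (F ∘ Complex.equivRealProdCLM.symm) p =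
      Complex.I • deriv F (Complex.equivRealProdCLM.symm p) := by
    simp [pdT, chain.fderiv, Complex.equivRealProdCLM_symm_apply (0, 1)]
  rw [dbar, hpdS, hpdT, smul_smul, Complex.I_mul_I, neg_one_smul, add_neg_cancel, smul_zero]

theorem two_smul_integral_dbar_eq_boundary {f : ℝ × ℝ → E} (hf : ContDiff ℝ 1 f) {a b c d : ℝ}
    (hab : a ≤ b) (hcd : c ≤ d) :
    (2 : ℂ) • ∫ p in Icc a b ×ˢ Icc c d, dbar f p =
      ((∫ t in c..d, f (b, t)) - ∫ t in c..d, f (a, t)) +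
        Complex.I • ((∫ s in a..b, f (s, d)) - ∫ s in a..b, f (s, c)) := by
  have hderiv (p : ℝ × ℝ) : HasFDerivAt f (fderiv ℝ f p) p :=
    (hf.differentiable one_ne_zero p).hasFDerivAt
  have hdiv (p : ℝ × ℝ) :
      fderiv ℝ f p (1, 0) + (Complex.I • fderiv ℝ f p) (0, 1) = (2 : ℂ) • dbar f p := by
    rw [dbar_eq_complex_smul, smul_inv_smul₀ two_ne_zero]
    rfl
  have hint : IntegrableOn (fun p ↦ (2 : ℂ) • dbar f p) (Icc (a, c) (b, d)) :=
    ((continuous_dbar hf).const_smul (2 : ℂ)).integrableOn_Icc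
  have divergence := integral_divergence_prod_Icc_of_hasFDerivAt_of_le f (fun p ↦ Complex.I • f p)
    (fderiv ℝ f) (fun p ↦ Complex.I • fderiv ℝ f p) (a, c) (b, d) ⟨hab, hcd⟩
    hf.continuous.continuousOn (hf.continuous.const_smul Complex.I).continuousOn
    (fun p _ ↦ hderiv p) (fun p _ ↦ (hderiv p).const_smul Complex.I)
    (by simpa only [hdiv] using hint)
  simp only [hdiv, integral_smul, intervalIntegral.integral_smul] at divergence
  rw [Icc_prod_Icc, divergence, smul_sub]
  abel

section decayingMode

variable (m : ℤ) (a : ℝ)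

theorem contDiff_decayingMode : ContDiff ℝ 1 (decayingMode m a) :=
  (contDiff_const.mul
    (Complex.equivRealProdCLM.symm.contDiff.sub contDiff_const)).cexp

theorem dbar_decayingMode (p : ℝ × ℝ) : dbar (decayingMode m a) p = 0 :=
  dbar_comp_equivRealProdCLM_symm (F := fun z ↦ Complex.exp (-(2 * π * m) * (z - a)))
    (by fun_prop)

theorem norm_decayingMode (p : ℝ × ℝ) :
    ‖decayingMode m a p‖ = Real.exp (-(2 * π * m * (p.1 - a))) := by
  simp [decayingMode, Complex.norm_exp, Complex.equivRealProdCLM_symm_apply]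

theorem decayingMode_apply_one_eq_apply_zero (s : ℝ) :
    decayingMode m a (s, 1) = decayingMode m a (s, 0) := by
  refine Complex.exp_eq_exp_iff_exists_int.2 ⟨-m, ?_⟩
  simp only [Complex.equivRealProdCLM_symm_apply]
  push_cast
  ring

theorem integral_decayingMode_smul (f : ℝ × ℝ → E) (s : ℝ) :
    ∫ t in (0 : ℝ)..1, decayingMode m a (s, t) • f (s, t) =
      Real.exp (-(2 * π * m * (s - a))) • sliceFourierCoeff f m s := by
  rw [sliceFourierCoeff, ← intervalIntegral.integral_smul]
  congr! 2 with t
  rw [← Complex.coe_smul, smul_smul, Complex.ofReal_exp, ← Complex.exp_add, decayingMode,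
    Complex.equivRealProdCLM_symm_apply]
  push_cast
  ring_nf

end decayingMode

theorem norm_decayingMode_le_one {m : ℤ} (hm : 0 ≤ m) {a : ℝ} {p : ℝ × ℝ} (hp : a ≤ p.1) :
    ‖decayingMode m a p‖ ≤ 1 := by
  have : 0 ≤ p.1 - a := sub_nonneg.2 hp
  rw [norm_decayingMode, Real.exp_le_one_iff, neg_nonpos]
  positivity

theorem exp_smul_sliceFourierCoeff_sub_eq_integral {v : ℝ × ℝ → E} (hv : ContDiff ℝ 1 v)
    (hper : ∀ s, v (s, 1) = v (s, 0)) (m : ℤ) {a b : ℝ} (hab : a ≤ b) :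
    Real.exp (-(2 * π * m * (b - a))) • sliceFourierCoeff v m b - sliceFourierCoeff v m a =
      (2 : ℂ) • ∫ p in Icc a b ×ˢ Icc (0 : ℝ) 1, decayingMode m a p • dbar v p := by
  have hmode := contDiff_decayingMode m a
  have dbar_eq (p : ℝ × ℝ) :
      dbar (fun q ↦ decayingMode m a q • v q) p = decayingMode m a p • dbar v p := by
    rw [dbar_smul (hmode.differentiable one_ne_zero p) (hv.differentiable one_ne_zero p),
      dbar_decayingMode, zero_smul, add_zero]
  have boundary := two_smul_integral_dbar_eq_boundary (f := fun q ↦ decayingMode m a q • v q)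
    (hmode.smul hv) hab zero_le_one
  simpa [dbar_eq, integral_decayingMode_smul, decayingMode_apply_one_eq_apply_zero, hper]
    using boundary.symm

theorem norm_sliceFourierCoeff_sub_exp_smul_le {v : ℝ × ℝ → E} (hv : ContDiff ℝ 1 v)
    (hper : ∀ s, v (s, 1) = v (s, 0)) {m : ℤ} (hm : 0 ≤ m) {a b : ℝ} (hab : a ≤ b) :
    ‖sliceFourierCoeff v m a -
        Real.exp (-(2 * π * m * (b - a))) • sliceFourierCoeff v m b‖ ≤
      2 * (√(b - a) * √(∫ p in Icc a b ×ˢ Icc (0 : ℝ) 1, ‖dbar v p‖ ^ 2)) := by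
  have hK : IsCompact (Icc a b ×ˢ Icc (0 : ℝ) 1) := isCompact_Icc.prod isCompact_Icc
  have : IsFiniteMeasure (volume.restrict (Icc a b ×ˢ Icc (0 : ℝ) 1)) :=
    isFiniteMeasure_restrict.2 hK.measure_lt_top.ne
  have hcont := continuous_dbar hv
  have hL2 : MemLp (dbar v) 2 (volume.restrict (Icc a b ×ˢ Icc (0 : ℝ) 1)) :=
    (memLp_two_iff_integrable_sq_norm hcont.aestronglyMeasurable).2
      (integrableOn_norm_dbar_sq hv hK)
  have hvol : volume.real (Icc a b ×ˢ Icc (0 : ℝ) 1) = b - a := by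
    rw [Measure.volume_eq_prod, measureReal_prod_prod, volume_real_Icc_of_le hab,
      volume_real_Icc_of_le zero_le_one, sub_zero, mul_one]
  rw [norm_sub_rev, exp_smul_sliceFourierCoeff_sub_eq_integral hv hper m hab, norm_smul,
    Complex.norm_ofNat]
  gcongr
  calc
    _ ≤ ∫ p in Icc a b ×ˢ Icc (0 : ℝ) 1, ‖dbar v p‖ := by
      refine norm_integral_le_of_norm_le (hcont.norm.continuousOn.integrableOn_compact hK)
        ((ae_restrict_mem hK.measurableSet).mono fun p hp ↦ ?_)
      rw [norm_smul]
      exact mul_le_of_le_one_left (norm_nonneg _) (norm_decayingMode_le_one hm hp.1.1)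
    _ ≤ √(b - a) * √(∫ p in Icc a b ×ˢ Icc (0 : ℝ) 1, ‖dbar v p‖ ^ 2) := by
      simpa only [measureReal_restrict_apply_univ, hvol] using
        integral_norm_le_sqrt_measureReal_mul_sqrt_integral_sq hL2

theorem tendsto_mul_norm_sliceFourierCoeff_sub_exp_smul {ι : Type*} {l : Filter ι}
    {v : ι → ℝ × ℝ → E} (hv : ∀ α, ContDiff ℝ 1 (v α)) (hper : ∀ α s, v α (s, 1) = v α (s, 0))
    {m : ℤ} (hm : 0 ≤ m) {a b : ℝ} (hab : a ≤ b) {K : Set (ℝ × ℝ)} (hK : IsCompact K)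
    (hsub : Icc a b ×ˢ Icc (0 : ℝ) 1 ⊆ K) {w : ι → ℝ} (hw : ∀ α, 0 ≤ w α)
    (hdecay : Tendsto (fun α ↦ w α * √(∫ p in K, ‖dbar (v α) p‖ ^ 2)) l (nhds 0)) :
    Tendsto (fun α ↦ w α * ‖sliceFourierCoeff (v α) m a -
      Real.exp (-(2 * π * m * (b - a))) • sliceFourierCoeff (v α) m b‖) l (nhds 0) := by
  refine squeeze_zero (fun α ↦ mul_nonneg (hw α) (norm_nonneg _)) (fun α ↦ ?_)
    (by simpa using hdecay.const_mul (2 * √(b - a)))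
  have enlarge : ∫ p in Icc a b ×ˢ Icc (0 : ℝ) 1, ‖dbar (v α) p‖ ^ 2 ≤
      ∫ p in K, ‖dbar (v α) p‖ ^ 2 :=
    setIntegral_mono_set (integrableOn_norm_dbar_sq (hv α) hK)
      (.of_forall fun _ ↦ sq_nonneg _) hsub.eventuallyLE
  calc
    _ ≤ w α * (2 * (√(b - a) * √(∫ p in K, ‖dbar (v α) p‖ ^ 2))) := by
      refine mul_le_mul_of_nonneg_left ?_ (hw α)
      exact (norm_sliceFourierCoeff_sub_exp_smul_le (hv α) (hper α) hm hab).trans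
        (by gcongr)
    _ = 2 * √(b - a) * (w α * √(∫ p in K, ‖dbar (v α) p‖ ^ 2)) := by ring

theorem stmt_4_general [CompleteSpace E] {m : ℤ} (hm : 0 ≤ m) :
    (∀ v : ℝ × ℝ → E, ContDiff ℝ 1 v → (∀ s, v (s, 1) = v (s, 0)) →
      ‖sliceFourierCoeff v m 0 - Real.exp (-(2 * π * m)) • sliceFourierCoeff v m 1‖ ≤
        2 * √(∫ p in Icc (0 : ℝ) 1 ×ˢ Icc (0 : ℝ) 1, ‖dbar v p‖ ^ 2)) ∧
    (∀ {ι : Type*} {l : Filter ι} (ρ : ι → ℝ) (v : ι → ℝ × ℝ → E),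
      (∀ α, ContDiff ℝ 1 (v α)) → (∀ α s, v α (s, 1) = v α (s, 0)) →
      Tendsto (fun α ↦ Real.exp (2 * π * ρ α) *
          √(∫ p in Icc (-1 : ℝ) 1 ×ˢ Icc (0 : ℝ) 1, ‖dbar (v α) p‖ ^ 2)) l (nhds 0) →
      Tendsto (fun α ↦ Real.exp (2 * π * ρ α) *
          ‖sliceFourierCoeff (v α) m 0 -
            Real.exp (-(2 * π * m)) • sliceFourierCoeff (v α) m 1‖) l (nhds 0)) := by
  refine ⟨fun v hv hper ↦ ?_, fun ρ v hv hper hdecay ↦ ?_⟩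
  · simpa using norm_sliceFourierCoeff_sub_exp_smul_le hv hper hm zero_le_one
  · simpa using tendsto_mul_norm_sliceFourierCoeff_sub_exp_smul hv hper hm zero_le_one
      (isCompact_Icc.prod isCompact_Icc) (prod_mono_left (Icc_subset_Icc_left (by norm_num)))
      (fun α ↦ (Real.exp_pos _).le) hdecay

theorem stmt_4 (n : ℕ) (hn : 1 ≤ n) :
    -- cut-off decay controls the first Fourier coefficient across the middle of the neck
    (∀ v : ℝ × ℝ → Cn n, ContDiff ℝ 1 v → (∀ s t : ℝ, v (s, t + 1) = v (s, t)) →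
      ‖fCoef v 1 0 - Real.exp (-(2 * π)) • fCoef v 1 1‖ ≤
        2 * Real.sqrt (∫ p in Icc (0:ℝ) 1 ×ˢ Icc (0:ℝ) 1, ‖dbar v p‖ ^ 2)) ∧
    (∀ (ρ : ℕ → ℝ) (vα : ℕ → ℝ × ℝ → Cn n),
      (∀ α, 1 ≤ ρ α) → (∀ α, ContDiff ℝ 1 (vα α)) →
      (∀ α, ∀ s t : ℝ, vα α (s, t + 1) = vα α (s, t)) →
      Tendsto (fun α => Real.exp (2 * π * ρ α) *
          Real.sqrt (∫ p in Icc (-1:ℝ) 1 ×ˢ Icc (0:ℝ) 1, ‖dbar (vα α) p‖ ^ 2))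
        atTop (nhds 0) →
      Tendsto (fun α => Real.exp (2 * π * ρ α) *
          ‖fCoef (vα α) 1 0 - Real.exp (-(2 * π)) • fCoef (vα α) 1 1‖)
        atTop (nhds 0)) := by
  have general := stmt_4_general (E := Cn n) (m := 1) zero_le_one
  simp only [Int.cast_one, mul_one] at general
  exact ⟨fun v hv hper ↦ general.1 v hv fun s ↦ by simpa using hper s 0,
    fun ρ v _ hv hper ↦ general.2 ρ v hv fun α s ↦ by simpa using hper α s 0⟩
end
end

section
/- Let δ > 0, ρ > 1, and let v : [1,ρ]×I → ℂⁿ be a C¹ map. Let h₁(s) := ∫₀¹ v(s,t)e^{−2πit} dt and b₁(s) := (1/2)(h₁′(s) − 2π h₁(s)) (so b₁(s) is the first Fourier coefficient of ∂̄v at s). Then for every s ∈ [1,ρ]: |h₁(s) − e^{2π(s−1)}h₁(1)| ≤ √(2/δ) · e^{−(2π+δ)(ρ−s)} · ( ∫₁^{ρ} |b₁(σ)|² e^{2(2π+δ)(ρ−σ)} dσ )^{1/2}. (Quantitative form of the paper's Lemma 4.3: if the weighted norm of the Fourier mode b₁ of ∂̄v is controlled, then h₁ grows like a holomorphic mode up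 to an exponentially small error.) -/
open MeasureTheory Real Set Filter

noncomputable section

/-!
The mode `h = fCoef v m` is `C¹`, and variation of constants with `c = 2πm` gives
`h s - e^{c(s-a)} h a = ∫ₐˢ e^{c(s-σ)} (h' σ - c h σ) dσ`, where, for periodic `v`, `h' - c h` is
twice the `m`-th mode of `∂̄v`. Split the kernel as `e^{c(s-σ)} = e^{-δ(s-σ)} e^{(c+δ)(s-σ)}`:
the first factor has `L²` norm at most `1/√(2δ)`, so Cauchy–Schwarz bounds the integral by `1/√(2δ)`
times the `L²` norm of `h' - c h` on `[a, s]` with weight `e^{2(c+δ)(s-σ)}`. Recentring the weight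
at the right endpoint `b` produces the factor `e^{-(c+δ)(b-s)}`.
-/

section CompactIntegration

variable {E : Type*} [NormedAddCommGroup E]

lemma memLp_restrict_of_continuousOn_isCompact {X : Type*} [TopologicalSpace X]
    [MeasurableSpace X] [OpensMeasurableSpace X] {μ : Measure X} [IsFiniteMeasureOnCompacts μ]
    {K : Set X} {f : X → E} (p : ENNReal)
    (hK : IsCompact K) (hK_meas : MeasurableSet K) (hf : ContinuousOn f K) :
    MemLp f p (μ.restrict K) := by
  have : IsFiniteMeasure (μ.restrict K) := ⟨by simpa using hK.measure_lt_top⟩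
  obtain ⟨C, hC⟩ := hK.exists_bound_of_continuousOn hf
  exact .of_bound (hf.aestronglyMeasurable_of_isCompact hK hK_meas) C
    ((ae_restrict_iff' hK_meas).2 (.of_forall hC))

lemma memLp_Ioc_of_continuousOn_Icc {μ : Measure ℝ} [IsFiniteMeasureOnCompacts μ] {a b : ℝ}
    {f : ℝ → E} (p : ENNReal) (hf : ContinuousOn f (Icc a b)) : MemLp f p (μ.restrict (Ioc a b)) :=
  (memLp_restrict_of_continuousOn_isCompact p isCompact_Icc measurableSet_Icc hf).mono_measure
    (Measure.restrict_mono Ioc_subset_Icc_self le_rfl)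

lemma contDiff_one_intervalIntegral {H : Type*} [NormedAddCommGroup H] [NormedSpace ℝ H]
    [LocallyCompactSpace H] [NormedSpace ℝ E] {μ : Measure ℝ} [IsLocallyFiniteMeasure μ]
    [NullSingletonClass μ] {f : H × ℝ → E} (hf : ContDiff ℝ 1 f) (a b : ℝ) :
    ContDiff ℝ 1 fun x ↦ ∫ t in a..b, f (x, t) ∂μ := by
  let f' : H → ℝ → H →L[ℝ] E := fun x t ↦ (fderiv ℝ f (x, t)).comp (.inl ℝ H ℝ)
  have hf'_cont : Continuous f'.uncurry :=
    (hf.continuous_fderiv one_ne_zero).clm_comp continuous_const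
  have hf'_deriv (x t) : HasFDerivAt (fun y ↦ f (y, t)) (f' x t) x :=
    (hf.differentiable one_ne_zero (x, t)).hasFDerivAt.comp x (hasFDerivAt_prodMk_left x t)
  refine contDiff_one_iff_hasFDerivAt.2 ⟨fun x ↦ ∫ t in a..b, f' x t ∂μ,
    intervalIntegral.continuous_parametric_intervalIntegral_of_continuous' hf'_cont a b,
    fun x ↦ ?_⟩
  obtain ⟨K, hK, hKx⟩ := exists_compact_mem_nhds x
  obtain ⟨C, hC⟩ :=
    (hK.prod (isCompact_uIcc (a := a) (b := b))).exists_bound_of_continuousOn hf'_cont.continuousOn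
  have hf_slice (y) : Continuous fun t ↦ f (y, t) := hf.continuous.comp (by fun_prop)
  exact intervalIntegral.hasFDerivAt_integral_of_dominated_of_fderiv_le hKx
    (.of_forall fun y ↦ (hf_slice y).aestronglyMeasurable) ((hf_slice x).intervalIntegrable a b)
    (hf'_cont.uncurry_left x).aestronglyMeasurable
    (.of_forall fun t ht y hy ↦ hC (y, t) ⟨hy, uIoc_subset_uIcc ht⟩)
    intervalIntegrable_const (.of_forall fun t _ y _ ↦ hf'_deriv y t)

end CompactIntegration

lemma contDiff_one_fCoef {n : ℕ} {v : ℝ × ℝ → Cn n} (hv : ContDiff ℝ 1 v) (m : ℤ) :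
    ContDiff ℝ 1 (fCoef v m) := by
  refine contDiff_one_intervalIntegral (μ := volume)
    (f := fun p : ℝ × ℝ ↦ Complex.exp (-(((2 * π * (m : ℝ) * p.2 : ℝ) : ℂ) * Complex.I)) • v p)
    ?_ 0 1
  have : ContDiff ℝ 1 fun p : ℝ × ℝ ↦ ((2 * π * (m : ℝ) * p.2 : ℝ) : ℂ) :=
    Complex.ofRealCLM.contDiff.comp (contDiff_const.mul contDiff_snd)
  fun_prop

section Estimates

variable {E : Type*} [NormedAddCommGroup E] [NormedSpace ℝ E]

lemma norm_integral_smul_le_sqrt_mul_sqrt {X : Type*} [MeasurableSpace X] {μ : Measure X}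
    {φ : X → ℝ} {f : X → E} (hφ : MemLp φ 2 μ) (hf : MemLp f 2 μ) :
    ‖∫ x, φ x • f x ∂μ‖ ≤ √(∫ x, φ x ^ 2 ∂μ) * √(∫ x, ‖f x‖ ^ 2 ∂μ) := by
  have holder := integral_mul_norm_le_Lp_mul_Lq (f := φ) (g := fun x ↦ ‖f x‖) .two_two
    (by simpa using hφ) (by simpa using hf.norm)
  calc ‖∫ x, φ x • f x ∂μ‖ ≤ ∫ x, ‖φ x • f x‖ ∂μ := norm_integral_le_integral_norm _
    _ = ∫ x, ‖φ x‖ * ‖‖f x‖‖ ∂μ := by simp only [norm_smul, norm_norm]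
    _ ≤ √(∫ x, φ x ^ 2 ∂μ) * √(∫ x, ‖f x‖ ^ 2 ∂μ) := by
      simpa [sqrt_eq_rpow] using holder

lemma sub_exp_smul_eq_integral_exp_smul_deriv_sub [CompleteSpace E] {a b c : ℝ} {h h' : ℝ → E}
    (hh : ∀ x ∈ uIcc a b, HasDerivAt h (h' x) x) (hh' : IntervalIntegrable h' volume a b) :
    h b - exp (c * (b - a)) • h a = ∫ x in a..b, exp (c * (b - x)) • (h' x - c • h x) := by
  have h_cont : ContinuousOn h (uIcc a b) := fun x hx ↦ (hh x hx).continuousAt.continuousWithinAt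
  have h_deriv : ∀ x ∈ uIcc a b, HasDerivAt (fun y ↦ exp (c * (b - y)) • h y)
      (exp (c * (b - x)) • (h' x - c • h x)) x := by
    intro x hx
    have := (((hasDerivAt_id x).const_sub b).const_mul c).exp.smul (hh x hx)
    refine this.congr_deriv ?_
    simp only [id_eq]
    module
  have h_int : IntervalIntegrable (fun x ↦ exp (c * (b - x)) • (h' x - c • h x)) volume a b :=
    (hh'.sub (h_cont.const_smul c).intervalIntegrable).continuousOn_smul (by fun_prop)
  simp [intervalIntegral.integral_eq_sub_of_hasDerivAt h_deriv h_int]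

lemma integral_sq_exp_neg_mul_sub_le {δ : ℝ} (hδ : 0 < δ) (a s : ℝ) :
    ∫ x in a..s, exp (-δ * (s - x)) ^ 2 ≤ 1 / (2 * δ) := by
  have h_deriv (x : ℝ) : HasDerivAt (fun y ↦ exp (-(2 * δ) * (s - y)) / (2 * δ))
      (exp (-δ * (s - x)) ^ 2) x := by
    have := ((((hasDerivAt_id x).const_sub s).const_mul (-(2 * δ))).exp).div_const (2 * δ)
    refine this.congr_deriv ?_
    rw [← exp_nat_mul]
    simp only [id_eq]
    field_simp
    ring_nf
  rw [intervalIntegral.integral_eq_sub_of_hasDerivAt (fun x _ ↦ h_deriv x)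
    (Continuous.intervalIntegrable (by fun_prop) _ _)]
  simp only [sub_self, mul_zero, exp_zero, sub_le_self_iff]
  positivity

lemma norm_exp_smul_sq (κ x : ℝ) (u : E) : ‖exp (κ * x) • u‖ ^ 2 = ‖u‖ ^ 2 * exp (2 * κ * x) := by
  rw [norm_smul, norm_of_nonneg (exp_nonneg _), mul_pow, ← exp_nat_mul, mul_comm]
  ring_nf

variable {a b s c δ : ℝ} {f : ℝ → E}

lemma memLp_exp_smul {p : ENNReal} (hf : MemLp f p (volume.restrict (Ioc a b))) (κ d : ℝ) :
    MemLp (fun x ↦ exp (κ * (d - x)) • f x) p (volume.restrict (Ioc a b)) :=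
  hf.smul (p := ⊤) (memLp_Ioc_of_continuousOn_Icc ⊤ (by fun_prop))

lemma norm_integral_exp_smul_le_sqrt (hδ : 0 < δ) (has : a ≤ s)
    (hf : MemLp f 2 (volume.restrict (Ioc a s))) :
    ‖∫ x in a..s, exp (c * (s - x)) • f x‖ ≤
      √(1 / (2 * δ)) * √(∫ x in a..s, ‖f x‖ ^ 2 * exp (2 * (c + δ) * (s - x))) := by
  have kernel_split (x : ℝ) : exp (c * (s - x)) • f x =
      exp (-δ * (s - x)) • exp ((c + δ) * (s - x)) • f x := by
    rw [smul_smul, ← exp_add]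
    ring_nf
  have cauchy_schwarz := norm_integral_smul_le_sqrt_mul_sqrt
    (φ := fun x ↦ exp (-δ * (s - x))) (memLp_Ioc_of_continuousOn_Icc 2 (by fun_prop))
    (memLp_exp_smul hf (c + δ) s)
  simp only [← intervalIntegral.integral_of_le has, norm_exp_smul_sq, ← kernel_split]
    at cauchy_schwarz
  exact cauchy_schwarz.trans (by gcongr; exact integral_sq_exp_neg_mul_sub_le hδ a s)

lemma sqrt_integral_norm_sq_mul_exp_le (has : a ≤ s) (hsb : s ≤ b)
    (hf : MemLp f 2 (volume.restrict (Ioc a b))) (κ : ℝ) :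
    √(∫ x in a..s, ‖f x‖ ^ 2 * exp (2 * κ * (s - x))) ≤
      exp (-κ * (b - s)) * √(∫ x in a..b, ‖f x‖ ^ 2 * exp (2 * κ * (b - x))) := by
  have weight_shift (x : ℝ) : ‖f x‖ ^ 2 * exp (2 * κ * (s - x)) =
      exp (-κ * (b - s)) ^ 2 * (‖f x‖ ^ 2 * exp (2 * κ * (b - x))) := by
    rw [← exp_nat_mul, mul_left_comm, ← exp_add]
    push_cast
    ring_nf
  have weighted_integrable :
      IntervalIntegrable (fun x ↦ ‖f x‖ ^ 2 * exp (2 * κ * (b - x))) volume a b := by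
    rw [intervalIntegrable_iff_integrableOn_Ioc_of_le (has.trans hsb)]
    simpa only [norm_exp_smul_sq, IntegrableOn] using
      (memLp_exp_smul hf κ b).integrable_norm_pow two_ne_zero
  simp only [weight_shift, intervalIntegral.integral_const_mul]
  rw [sqrt_mul (sq_nonneg _), sqrt_sq (exp_nonneg _)]
  gcongr
  exact intervalIntegral.integral_mono_interval le_rfl has hsb
    (.of_forall fun x ↦ by positivity) weighted_integrable

lemma norm_sub_exp_smul_le_of_hasDerivAt [CompleteSpace E] {h h' : ℝ → E} (hδ : 0 < δ)
    (has : a ≤ s) (hsb : s ≤ b) (hh : ∀ x ∈ Icc a b, HasDerivAt h (h' x) x)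
    (hh' : MemLp h' 2 (volume.restrict (Ioc a b))) :
    ‖h s - exp (c * (s - a)) • h a‖ ≤
      √(1 / (2 * δ)) * exp (-(c + δ) * (b - s)) *
        √(∫ x in a..b, ‖h' x - c • h x‖ ^ 2 * exp (2 * (c + δ) * (b - x))) := by
  have hsub : Ioc a s ⊆ Ioc a b := Ioc_subset_Ioc_right hsb
  have h_cont : ContinuousOn h (Icc a b) := fun x hx ↦ (hh x hx).continuousAt.continuousWithinAt
  have defect_memLp : MemLp (fun x ↦ h' x - c • h x) 2 (volume.restrict (Ioc a b)) :=
    hh'.sub (memLp_Ioc_of_continuousOn_Icc 2 (h_cont.const_smul c))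
  have h'_int : IntervalIntegrable h' volume a s :=
    (intervalIntegrable_iff_integrableOn_Ioc_of_le has).2
      ((hh'.integrable one_le_two).mono_measure (Measure.restrict_mono hsub le_rfl))
  rw [sub_exp_smul_eq_integral_exp_smul_deriv_sub
    (fun x hx ↦ hh x (Icc_subset_Icc_right hsb (uIcc_of_le has ▸ hx))) h'_int, mul_assoc]
  refine (norm_integral_exp_smul_le_sqrt hδ has
    (defect_memLp.mono_measure (Measure.restrict_mono hsub le_rfl))).trans ?_
  gcongr
  exact sqrt_integral_norm_sq_mul_exp_le has hsb defect_memLp (c + δ)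

lemma sqrt_integral_norm_const_smul_sq_mul (r a b : ℝ) (f : ℝ → E) (w : ℝ → ℝ) :
    √(∫ x in a..b, ‖r • f x‖ ^ 2 * w x) = |r| * √(∫ x in a..b, ‖f x‖ ^ 2 * w x) := by
  simp only [norm_smul, norm_eq_abs, mul_pow, mul_assoc, intervalIntegral.integral_const_mul]
  rw [sqrt_mul (by positivity), sqrt_sq (abs_nonneg r)]

end Estimates

theorem stmt_5_general {n : ℕ} {v : ℝ × ℝ → Cn n} (hv : ContDiff ℝ 1 v) (m : ℤ) {a b s δ : ℝ}
    (hδ : 0 < δ) (has : a ≤ s) (hsb : s ≤ b) :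
    ‖fCoef v m s - exp (2 * π * m * (s - a)) • fCoef v m a‖ ≤
      √(2 / δ) * exp (-(2 * π * m + δ) * (b - s)) *
        √(∫ σ in a..b, ‖(2⁻¹ : ℝ) • (deriv (fCoef v m) σ - (2 * π * m) • fCoef v m σ)‖ ^ 2 *
          exp (2 * (2 * π * m + δ) * (b - σ))) := by
  have h_contDiff := contDiff_one_fCoef hv m
  have estimate := norm_sub_exp_smul_le_of_hasDerivAt (c := 2 * π * m) hδ has hsb
    (fun σ _ ↦ (h_contDiff.differentiable one_ne_zero σ).hasDerivAt)
    (memLp_Ioc_of_continuousOn_Icc 2 (h_contDiff.continuous_deriv le_rfl).continuousOn)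
  have sqrt_const : √(1 / (2 * δ)) = √(2 / δ) * 2⁻¹ := by
    rw [← sqrt_sq (by norm_num : (0 : ℝ) ≤ 2⁻¹), ← sqrt_mul (by positivity)]
    congr 1
    field_simp
  rw [sqrt_integral_norm_const_smul_sq_mul, abs_of_pos (by norm_num : (0 : ℝ) < 2⁻¹)]
  exact estimate.trans_eq (by rw [sqrt_const]; ring)

theorem stmt_5 (n : ℕ) (hn : 1 ≤ n) (δ ρ : ℝ) (hδ : 0 < δ) (hρ : 1 < ρ)
    (v : ℝ × ℝ → Cn n) (hv : ContDiff ℝ 1 v) (hper : ∀ s t : ℝ, v (s, t + 1) = v (s, t))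
    (s : ℝ) (hs1 : 1 ≤ s) (hsρ : s ≤ ρ) :
    ‖fCoef v 1 s - Real.exp (2 * π * (s - 1)) • fCoef v 1 1‖ ≤
      Real.sqrt (2 / δ) * Real.exp (-(2 * π + δ) * (ρ - s)) *
        Real.sqrt (∫ σ in (1:ℝ)..ρ,
          ‖(2⁻¹ : ℝ) • (deriv (fun r => fCoef v 1 r) σ - (2 * π) • fCoef v 1 σ)‖ ^ 2 *
            Real.exp (2 * (2 * π + δ) * (ρ - σ))) := by
  simpa using stmt_5_general hv 1 hδ hs1 hsρ
end
end

section
/- Let n ≥ 1 and M > 0. Let W : I → End(ℝ^{2n}) be integrable with ∫₀¹ |Id − W(t)| dt ≤ 1/2 and ∫₀¹ |W(t)|² dt ≤ M. Then M₀ := ∫₀¹ W(t) dt is invertible with |M₀^{−1}| ≤ 2, and for every integrable map g : I → ℝ^{2n} with ∫₀¹ |g(t)|² dt < ∞ and every c ∈ ℝ^{2n}, the vector ĝ := M₀^{−1}·∫₀¹ W(t)g(t) dt satisfies |ĝ − c| ≤ 2√M·( ∫₀¹ |g(t) − c|² dt )^{1/2}. (Quantitative form of the paper's Lemma 5.7: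 the frame-twisted average of a map is close to any constant that the map is L²-close to.) -/
open MeasureTheory Real Set

noncomputable section

/-!
Since `‖1 - ∫ W‖ ≤ ∫ ‖1 - W‖ ≤ δ < 1`, the Neumann series inverts `M₀ = ∫ W` with
`‖M₀⁻¹‖ ≤ (1 - δ)⁻¹`. As `M₀ c = ∫ W c`, we have `M₀⁻¹ (∫ W g) - c = M₀⁻¹ (∫ W (g - c))`, and the
Cauchy–Schwarz inequality bounds the last integral.
-/

section NeumannSeries

variable {R : Type*} [NormedRing R] [HasSummableGeomSeries R] {a : R} {δ : ℝ}

theorem isUnit_of_norm_one_sub_lt_one (ha : ‖1 - a‖ < 1) : IsUnit a := by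
  simpa only [sub_sub_cancel] using isUnit_one_sub_of_norm_lt_one ha

theorem norm_ringInverse_le_of_norm_one_sub_le (hone : ‖(1 : R)‖ ≤ 1) (hδ : δ < 1)
    (ha : ‖1 - a‖ ≤ δ) : ‖Ring.inverse a‖ ≤ (1 - δ)⁻¹ := by
  have hlt : ‖1 - a‖ < 1 := ha.trans_lt hδ
  have hseries : Ring.inverse a = ∑' k : ℕ, (1 - a) ^ k :=
    calc Ring.inverse a = Ring.inverse (1 - (1 - a)) := by rw [sub_sub_cancel]
      _ = ∑' k : ℕ, (1 - a) ^ k := NormedRing.inverse_one_sub (1 - a) hlt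
  calc ‖Ring.inverse a‖ ≤ ‖(1 : R)‖ - 1 + (1 - ‖1 - a‖)⁻¹ :=
        hseries ▸ tsum_geometric_le_of_norm_lt_one (1 - a) hlt
    _ ≤ (1 - ‖1 - a‖)⁻¹ := by linarith
    _ ≤ (1 - δ)⁻¹ := inv_anti₀ (sub_pos.2 hδ) (by linarith)

end NeumannSeries

section OperatorValued

variable {Ω E F : Type*} [MeasurableSpace Ω] {μ : Measure Ω}
  [NormedAddCommGroup E] [NormedSpace ℝ E] [NormedAddCommGroup F] [NormedSpace ℝ F]

theorem norm_sub_integral_le_integral_norm_sub [CompleteSpace E] [IsProbabilityMeasure μ]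
    {f : Ω → E} (hf : Integrable f μ) (a : E) : ‖a - ∫ t, f t ∂μ‖ ≤ ∫ t, ‖a - f t‖ ∂μ := by
  have hmean : a - ∫ t, f t ∂μ = ∫ t, (a - f t) ∂μ := by
    rw [integral_sub (integrable_const a) hf, integral_const, probReal_univ, one_smul]
  exact hmean ▸ norm_integral_le_integral_norm _

variable {W : Ω → E →L[ℝ] F}

theorem integrable_clm_apply {p q : ENNReal} [p.HolderConjugate q] {f : Ω → E}
    (hW : MemLp W p μ) (hf : MemLp f q μ) : Integrable (fun t => W t (f t)) μ :=
  memLp_one_iff_integrable.1 <| (ContinuousLinearMap.id ℝ (E →L[ℝ] F)).memLp_of_bilin 1 hW hf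

theorem norm_integral_clm_apply_le_Lp_mul_Lq {p q : ℝ} (hpq : p.HolderConjugate q) {f : Ω → E}
    (hW : MemLp W (ENNReal.ofReal p) μ) (hf : MemLp f (ENNReal.ofReal q) μ) :
    ‖∫ t, W t (f t) ∂μ‖ ≤ (∫ t, ‖W t‖ ^ p ∂μ) ^ (1 / p) * (∫ t, ‖f t‖ ^ q ∂μ) ^ (1 / q) := by
  have : (ENNReal.ofReal p).HolderConjugate (ENNReal.ofReal q) := hpq.ennrealOfReal
  calc ‖∫ t, W t (f t) ∂μ‖ ≤ ∫ t, ‖W t‖ * ‖f t‖ ∂μ :=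
        norm_integral_le_of_norm_le (hW.norm.integrable_mul hf.norm)
          (ae_of_all μ fun t => (W t).le_opNorm (f t))
    _ ≤ (∫ t, ‖W t‖ ^ p ∂μ) ^ (1 / p) * (∫ t, ‖f t‖ ^ q ∂μ) ^ (1 / q) := by
        simpa only [norm_norm] using integral_mul_norm_le_Lp_mul_Lq hpq hW.norm hf.norm

theorem norm_integral_clm_apply_le_sqrt_mul_sqrt {f : Ω → E} (hW : MemLp W 2 μ)
    (hf : MemLp f 2 μ) :
    ‖∫ t, W t (f t) ∂μ‖ ≤ √(∫ t, ‖W t‖ ^ 2 ∂μ) * √(∫ t, ‖f t‖ ^ 2 ∂μ) := by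
  rw [← ENNReal.ofReal_ofNat 2] at hW hf
  simpa only [rpow_two, ← sqrt_eq_rpow] using
    norm_integral_clm_apply_le_Lp_mul_Lq HolderConjugate.two_two hW hf

theorem integral_clm_apply_sub_const {g : Ω → E} (hW : Integrable W μ)
    (hWg : Integrable (fun t => W t (g t)) μ) (c : E) :
    ∫ t, W t (g t - c) ∂μ = ∫ t, W t (g t) ∂μ - (∫ t, W t ∂μ) c := by
  simp only [map_sub]
  rw [integral_sub hWg (hW.apply_continuousLinearMap c), ContinuousLinearMap.integral_apply hW]

end OperatorValued

theorem ringInverse_apply_sub_eq {R E : Type*} [Semiring R] [TopologicalSpace E] [AddCommGroup E]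
    [Module R E] {A : E →L[R] E} (hA : IsUnit A) (y c : E) :
    Ring.inverse A y - c = Ring.inverse A (y - A c) := by
  have hcancel : Ring.inverse A (A c) = c := DFunLike.congr_fun (Ring.inverse_mul_cancel A hA) c
  rw [map_sub, hcancel]

theorem stmt_10_general {Ω E : Type*} [MeasurableSpace Ω] {μ : Measure Ω} [IsProbabilityMeasure μ]
    [NormedAddCommGroup E] [NormedSpace ℝ E] [CompleteSpace E] {W : Ω → E →L[ℝ] E} {δ M : ℝ}
    (hδ : δ < 1) (hW : MemLp W 2 μ) (hWδ : ∫ t, ‖1 - W t‖ ∂μ ≤ δ)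
    (hWM : ∫ t, ‖W t‖ ^ 2 ∂μ ≤ M) :
    IsUnit (∫ t, W t ∂μ) ∧
    ‖Ring.inverse (∫ t, W t ∂μ)‖ ≤ (1 - δ)⁻¹ ∧
    ∀ (g : Ω → E) (c : E), MemLp g 2 μ →
      ‖Ring.inverse (∫ t, W t ∂μ) (∫ t, W t (g t) ∂μ) - c‖ ≤
        (1 - δ)⁻¹ * √M * √(∫ t, ‖g t - c‖ ^ 2 ∂μ) := by
  have hWint : Integrable W μ := hW.integrable one_le_two
  have hnear : ‖1 - ∫ t, W t ∂μ‖ ≤ δ :=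
    (norm_sub_integral_le_integral_norm_sub hWint 1).trans hWδ
  have hunit : IsUnit (∫ t, W t ∂μ) := isUnit_of_norm_one_sub_lt_one (hnear.trans_lt hδ)
  have hinv : ‖Ring.inverse (∫ t, W t ∂μ)‖ ≤ (1 - δ)⁻¹ :=
    norm_ringInverse_le_of_norm_one_sub_le ContinuousLinearMap.norm_id_le hδ hnear
  refine ⟨hunit, hinv, fun g c hg => ?_⟩
  have : 0 ≤ (1 - δ)⁻¹ := (norm_nonneg _).trans hinv
  rw [ringInverse_apply_sub_eq hunit,
    ← integral_clm_apply_sub_const hWint (integrable_clm_apply hW hg), mul_assoc]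
  calc ‖Ring.inverse (∫ t, W t ∂μ) (∫ t, W t (g t - c) ∂μ)‖
      ≤ (1 - δ)⁻¹ * ‖∫ t, W t (g t - c) ∂μ‖ := ContinuousLinearMap.le_of_opNorm_le _ hinv _
    _ ≤ (1 - δ)⁻¹ * (√(∫ t, ‖W t‖ ^ 2 ∂μ) * √(∫ t, ‖g t - c‖ ^ 2 ∂μ)) := by
        gcongr
        exact norm_integral_clm_apply_le_sqrt_mul_sqrt hW (hg.sub (memLp_const c))
    _ ≤ (1 - δ)⁻¹ * (√M * √(∫ t, ‖g t - c‖ ^ 2 ∂μ)) := by gcongr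

theorem stmt_10 (n : ℕ) (hn : 1 ≤ n) (M : ℝ) (hM : 0 < M)
    (W : ℝ → (EuclideanSpace ℝ (Fin (2 * n)) →L[ℝ] EuclideanSpace ℝ (Fin (2 * n))))
    (hWint : IntegrableOn W (Icc (0:ℝ) 1))
    (hWsq : IntegrableOn (fun t => ‖W t‖ ^ 2) (Icc (0:ℝ) 1))
    (hW1 : (∫ t in (0:ℝ)..1, ‖1 - W t‖) ≤ 1 / 2)
    (hW2 : (∫ t in (0:ℝ)..1, ‖W t‖ ^ 2) ≤ M) :
    IsUnit (∫ t in (0:ℝ)..1, W t) ∧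
    ‖Ring.inverse (∫ t in (0:ℝ)..1, W t)‖ ≤ 2 ∧
    ∀ (g : ℝ → EuclideanSpace ℝ (Fin (2 * n))) (c : EuclideanSpace ℝ (Fin (2 * n))),
      IntegrableOn g (Icc (0:ℝ) 1) →
      IntegrableOn (fun t => ‖g t‖ ^ 2) (Icc (0:ℝ) 1) →
      ‖Ring.inverse (∫ t in (0:ℝ)..1, W t) (∫ t in (0:ℝ)..1, W t (g t)) - c‖ ≤
        2 * Real.sqrt M * Real.sqrt (∫ t in (0:ℝ)..1, ‖g t - c‖ ^ 2) := by
  have : IsProbabilityMeasure (volume.restrict (Icc (0:ℝ) 1)) := ⟨by simp⟩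
  simp only [intervalIntegral.integral_of_le zero_le_one, ← integral_Icc_eq_integral_Ioc]
    at hW1 hW2 ⊢
  have hW : MemLp W 2 (volume.restrict (Icc 0 1)) :=
    (memLp_two_iff_integrable_sq_norm hWint.aestronglyMeasurable).2 hWsq
  obtain ⟨hunit, hinv, hmean⟩ := stmt_10_general one_half_lt_one hW hW1 hW2
  rw [show (1 - 1 / 2 : ℝ)⁻¹ = 2 by norm_num] at hinv hmean
  exact ⟨hunit, hinv, fun g c hg hgsq =>
    hmean g c ((memLp_two_iff_integrable_sq_norm hg.aestronglyMeasurable).2 hgsq)⟩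
end
end

section
/- Let k ≥ 0 be an integer and let δ > 0 with δ ∉ 2πℤ. Consider on maps f : ℝ×I → ℂ the weighted Sobolev quantity N_m(f) := (∫_{ℝ×I} Σ_{j=0}^{m} |d^{(j)}f(s,t)|² e^{2δs} ds dt)^{1/2}. Then there is a constant C = C(k,δ) such that: (existence with estimate) for every smooth f : ℝ×I → ℂ with N_k(f) < ∞ there exists a smooth u : ℝ×I → ℂ with ∂̄u = f and N_{k+1}(u) ≤ C·N_k(f); (uniqueness) if u₁, u₂ are C¹ maps with ∂̄u₁ = ∂̄u₂ = f and N_0(u₁), N_0(u₂) < ∞, then u₁ = u₂. (Paper's Corollary 6.2: invertibility of the Cauchy–Riemann operator on the infinite cylinder in weighted Sobolev spaces with weights −δ, δ at the two ends.) -/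
open MeasureTheory Real Set Filter

noncomputable section

/-- The weighted Sobolev quantity `N_m(f)` on the full cylinder with weight `e^{2δ s}`
(the weights `(−δ, δ)` at the two ends). -/
def wN (m : ℕ) (δ : ℝ) (f : ℝ × ℝ → ℂ) : ℝ :=
  Real.sqrt (∫ p in (univ : Set ℝ) ×ˢ Icc (0:ℝ) 1,
    (∑ j ∈ Finset.range (m + 1), ‖iteratedFDeriv ℝ j f p‖ ^ 2) * Real.exp (2 * δ * p.1))

/-!
Expanding in Fourier modes in `t` turns `∂̄u = f` into the decoupled equations
`u_m' = 2πm u_m + 2 f_m`. Conjugation with `e^{δs}` replaces the coefficient `2πm` by `δ + 2πm`,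
which is bounded away from `0` because `δ ∉ 2πℤ`; hence every mode has exactly one solution of
finite weighted energy, with norm at most `2 / |δ + 2πm|` times that of `f_m`, and this factor gains
one `t`-derivative. Pointwise, data of `f_m` at distance at least `1` enter the solution only with a
factor `e^{-|δ + 2πm|/2}`, so the locally uniform rapid decay of `f_m` in `m` passes to `u_m`, and
`u` is smooth. The higher Sobolev estimates follow by commuting with `∂_t` and from
`∂_s u = 2f - i ∂_t u`.
-/

open scoped ContDiff ENNReal Topology

section Energy

variable {E : Type*} [NormedAddCommGroup E]

/-- The squared `L²(e^{2δs} ds)`-norm of a function on the line, as an extended real so that no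
integrability has to be assumed. -/
def lineEnergy (δ : ℝ) (c : ℝ → E) : ℝ≥0∞ :=
  ∫⁻ s, ‖c s‖ₑ ^ 2 * ENNReal.ofReal (Real.exp (2 * δ * s))

lemma enorm_sq_eq_ofReal (z : E) : ‖z‖ₑ ^ 2 = ENNReal.ofReal (‖z‖ ^ 2) := by
  rw [ENNReal.ofReal_pow (norm_nonneg _), ofReal_norm]

lemma lineEnergy_zero (c : ℝ → E) : lineEnergy 0 c = ∫⁻ s, ‖c s‖ₑ ^ 2 := by
  simp [lineEnergy]

lemma lineEnergy_zero_comp_neg (c : ℝ → E) :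
    lineEnergy 0 (fun s ↦ c (-s)) = lineEnergy 0 c := by
  simp only [lineEnergy_zero]
  exact lintegral_neg_eq_self fun s ↦ ‖c s‖ₑ ^ 2

lemma lineEnergy_const_smul {𝕜 : Type*} [NormedField 𝕜] [NormedSpace 𝕜 E] (δ : ℝ) (a : 𝕜)
    (c : ℝ → E) : lineEnergy δ (fun s ↦ a • c s) = ‖a‖ₑ ^ 2 * lineEnergy δ c := by
  rw [lineEnergy, lineEnergy, ← lintegral_const_mul' _ _ (by simp)]
  simp only [enorm_smul, mul_pow, mul_assoc]

lemma lineEnergy_exp_smul [NormedSpace ℝ E] (δ ε : ℝ) (c : ℝ → E) :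
    lineEnergy δ (fun s ↦ Real.exp (ε * s) • c s) = lineEnergy (δ + ε) c := by
  refine lintegral_congr fun s ↦ ?_
  rw [enorm_smul, mul_pow, Real.enorm_of_nonneg (Real.exp_pos _).le,
    ← ENNReal.ofReal_pow (Real.exp_pos _).le, mul_right_comm,
    ← ENNReal.ofReal_mul (by positivity), ← Real.exp_nat_mul, ← Real.exp_add, mul_comm]
  push_cast
  ring_nf

lemma integrable_norm_sq_of_lineEnergy_ne_top {c : ℝ → E} (hc : Continuous c)
    (hfin : lineEnergy 0 c ≠ ⊤) : Integrable fun s ↦ ‖c s‖ ^ 2 := by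
  refine ⟨by fun_prop, ?_⟩
  rw [hasFiniteIntegral_iff_ofReal (Eventually.of_forall fun s ↦ by positivity)]
  simpa only [lineEnergy_zero, enorm_sq_eq_ofReal] using hfin.lt_top

lemma integral_norm_sq_eq_toReal_lineEnergy {c : ℝ → E} (hc : Continuous c) :
    ∫ s, ‖c s‖ ^ 2 = (lineEnergy 0 c).toReal := by
  rw [integral_eq_lintegral_of_nonneg_ae (Eventually.of_forall fun s ↦ by positivity)
    (by fun_prop)]
  simp only [lineEnergy_zero, enorm_sq_eq_ofReal]

end Energy

section Young

lemma sq_lintegral_mul_le {α : Type*} [MeasurableSpace α] {μ : Measure α} {k φ : α → ℝ≥0∞}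
    (hk : Measurable k) (hφ : Measurable φ) :
    (∫⁻ x, k x * φ x ∂μ) ^ 2 ≤ (∫⁻ x, k x ∂μ) * ∫⁻ x, k x * φ x ^ 2 ∂μ := by
  -- Cauchy–Schwarz for `1` and `φ` with respect to the measure `k μ`
  have hölder := ENNReal.lintegral_mul_le_Lp_mul_Lq (μ.withDensity k) Real.HolderConjugate.two_two
    (f := fun _ ↦ 1) (g := φ) (by fun_prop) hφ.aemeasurable
  have hölder_sq := pow_le_pow_left₀ zero_le hölder 2
  simp only [mul_pow, ← ENNReal.rpow_natCast, ← ENNReal.rpow_mul] at hölder_sq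
  rw [lintegral_withDensity_eq_lintegral_mul _ hk (by fun_prop),
    lintegral_withDensity_eq_lintegral_mul _ hk (by fun_prop),
    lintegral_withDensity_eq_lintegral_mul _ hk (by fun_prop)] at hölder_sq
  simpa using hölder_sq

lemma lintegral_sq_lintegral_sub_mul_le {G : Type*} [AddCommGroup G] [MeasurableSpace G]
    [MeasurableAdd₂ G] [MeasurableNeg G] {μ : Measure G} [SFinite μ] [μ.IsAddLeftInvariant]
    [μ.IsNegInvariant] {k φ : G → ℝ≥0∞} (hk : Measurable k) (hφ : Measurable φ) :
    ∫⁻ s, (∫⁻ x, k (x - s) * φ x ∂μ) ^ 2 ∂μ ≤ (∫⁻ x, k x ∂μ) ^ 2 * ∫⁻ x, φ x ^ 2 ∂μ := by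
  have hmeas : Measurable fun q : G × G ↦ k (q.2 - q.1) * φ q.2 ^ 2 := by fun_prop
  calc ∫⁻ s, (∫⁻ x, k (x - s) * φ x ∂μ) ^ 2 ∂μ
      ≤ ∫⁻ s, (∫⁻ x, k x ∂μ) * ∫⁻ x, k (x - s) * φ x ^ 2 ∂μ ∂μ := by
        refine lintegral_mono fun s ↦ ?_
        rw [← lintegral_sub_right_eq_self k s]
        exact sq_lintegral_mul_le (by fun_prop) hφ
    _ = (∫⁻ x, k x ∂μ) * ∫⁻ x, ∫⁻ s, k (x - s) * φ x ^ 2 ∂μ ∂μ := by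
        rw [lintegral_const_mul _ hmeas.lintegral_prod_right',
          lintegral_lintegral_swap hmeas.aemeasurable]
    _ = (∫⁻ x, k x ∂μ) ^ 2 * ∫⁻ x, φ x ^ 2 ∂μ := by
        have inner (x : G) : ∫⁻ s, k (x - s) * φ x ^ 2 ∂μ = (∫⁻ x, k x ∂μ) * φ x ^ 2 := by
          rw [lintegral_mul_const _ (by fun_prop), lintegral_sub_left_eq_self k x]
        simp only [inner]
        rw [lintegral_const_mul _ (by fun_prop), ← mul_assoc, sq]

end Young

section LinearODE

variable {E : Type*} [NormedAddCommGroup E] [NormedSpace ℝ E]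

lemma integrableOn_exp_neg_mul_sub_Ioi {l : ℝ} (hl : 0 < l) (a s : ℝ) :
    IntegrableOn (fun x ↦ Real.exp (-l * (x - a))) (Ioi s) := by
  simp only [mul_sub, Real.exp_sub]
  exact (integrableOn_exp_mul_Ioi (neg_lt_zero.2 hl) s).div_const _

lemma integral_exp_neg_mul_sub_Ioi {l : ℝ} (hl : 0 < l) (s : ℝ) :
    ∫ x in Ioi s, Real.exp (-l * (x - s)) = 1 / l := by
  simp only [mul_sub, Real.exp_sub]
  rw [integral_div, integral_exp_mul_Ioi (neg_lt_zero.2 hl)]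
  field_simp

lemma exp_neg_mul_mul_le {l r y b : ℝ} (hl : 0 ≤ l) (hry : r ≤ y) (hb : 0 ≤ b) :
    Real.exp (-l * y) * b ≤ Real.exp (-l * r / 2) * (Real.exp (-l * y) + b ^ 2) := by
  -- half of the decay gives the prefactor, AM-GM with the other half separates the product
  set a := Real.exp (-l * y / 2) with ha
  have hexp : Real.exp (-l * y) = a ^ 2 := by
    rw [ha, ← Real.exp_nat_mul]
    congr 1
    push_cast
    ring
  have hle : a ≤ Real.exp (-l * r / 2) := by
    rw [ha, Real.exp_le_exp]
    nlinarith
  calc Real.exp (-l * y) * b = a * (a * b) := by rw [hexp]; ring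
    _ ≤ Real.exp (-l * r / 2) * (a ^ 2 + b ^ 2) := by
        gcongr
        nlinarith [sq_nonneg (a - b)]
    _ = _ := by rw [hexp]

/-- The solution of `v' = l v + g` which decays at both ends when `0 < l` and `g` does: variation
of constants from `+∞`. -/
def decayingSolution (l : ℝ) (g : ℝ → E) (s : ℝ) : E :=
  -∫ x in Ioi s, Real.exp (-l * (x - s)) • g x

section Pos

variable {l : ℝ} {g : ℝ → E}

lemma integrableOn_exp_smul_Ioi (hl : 0 < l) (hg : Continuous g) (hfin : lineEnergy 0 g ≠ ⊤)
    (a s : ℝ) : IntegrableOn (fun x ↦ Real.exp (-l * (x - a)) • g x) (Ioi s) := by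
  have hsq : IntegrableOn (fun x ↦ ‖g x‖ ^ 2) (Ioi s) :=
    (integrable_norm_sq_of_lineEnergy_ne_top hg hfin).integrableOn
  have hbound : IntegrableOn (fun x ↦ Real.exp (-l * (s - a) / 2) *
      (Real.exp (-l * (x - a)) + ‖g x‖ ^ 2)) (Ioi s) :=
    ((integrableOn_exp_neg_mul_sub_Ioi hl a s).add hsq).const_mul _
  refine Integrable.mono' hbound (by fun_prop) (ae_restrict_of_forall_mem measurableSet_Ioi ?_)
  intro x hx
  rw [norm_smul, Real.norm_of_nonneg (Real.exp_pos _).le]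
  exact exp_neg_mul_mul_le hl.le (sub_le_sub_right (mem_Ioi.1 hx).le a) (norm_nonneg _)

lemma decayingSolution_eq (hl : 0 < l) (hg : Continuous g) (hfin : lineEnergy 0 g ≠ ⊤) (s : ℝ) :
    decayingSolution l g s = Real.exp (l * s) • ((∫ x in (0 : ℝ)..s, Real.exp (-l * x) • g x) -
      ∫ x in Ioi (0 : ℝ), Real.exp (-l * x) • g x) := by
  have hint (a : ℝ) : IntegrableOn (fun x ↦ Real.exp (-l * x) • g x) (Ioi a) := by
    simpa using integrableOn_exp_smul_Ioi hl hg hfin 0 a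
  rw [← intervalIntegral.integral_interval_add_Ioi (hint 0) (hint s), sub_add_cancel_left,
    smul_neg, ← integral_smul, decayingSolution]
  congr 2 with x
  rw [smul_smul, ← Real.exp_add]
  ring_nf

lemma hasDerivAt_exp_mul (a s : ℝ) :
    HasDerivAt (fun s ↦ Real.exp (a * s)) (a * Real.exp (a * s)) s := by
  simpa [mul_comm] using ((hasDerivAt_id s).const_mul a).exp

lemma hasDerivAt_decayingSolution [CompleteSpace E] (hl : 0 < l) (hg : Continuous g)
    (hfin : lineEnergy 0 g ≠ ⊤) (s : ℝ) :
    HasDerivAt (decayingSolution l g) (l • decayingSolution l g s + g s) s := by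
  have hcont : Continuous fun x ↦ Real.exp (-l * x) • g x := by fun_prop
  have hderiv := (hasDerivAt_exp_mul l s).smul
    ((hcont.integral_hasStrictDerivAt 0 s).hasDerivAt.sub_const
      (∫ x in Ioi (0 : ℝ), Real.exp (-l * x) • g x))
  have hcancel : Real.exp (l * s) • Real.exp (-l * s) • g s = g s := by
    rw [smul_smul, ← Real.exp_add]
    simp
  rw [hcancel, mul_smul, ← decayingSolution_eq hl hg hfin, add_comm] at hderiv
  exact hderiv.congr_of_eventuallyEq (Eventually.of_forall (decayingSolution_eq hl hg hfin))

lemma lineEnergy_decayingSolution_le (hl : 0 < l) (hg : Continuous g) :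
    lineEnergy 0 (decayingSolution l g) ≤ ENNReal.ofReal (1 / l ^ 2) * lineEnergy 0 g := by
  set k : ℝ → ℝ≥0∞ := (Ioi (0 : ℝ)).indicator fun x ↦ ENNReal.ofReal (Real.exp (-l * x)) with hk
  have hk_meas : Measurable k := Measurable.indicator (by fun_prop) measurableSet_Ioi
  have hk_int : ∫⁻ x, k x = ENNReal.ofReal (1 / l) := by
    rw [hk, lintegral_indicator measurableSet_Ioi, ← ofReal_integral_eq_lintegral_ofReal
      (integrableOn_exp_mul_Ioi (neg_lt_zero.2 hl) 0)
      (Eventually.of_forall fun x ↦ (Real.exp_pos _).le)]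
    simpa using congrArg ENNReal.ofReal (integral_exp_neg_mul_sub_Ioi hl 0)
  have hpointwise (s : ℝ) : ‖decayingSolution l g s‖ₑ ≤ ∫⁻ x, k (x - s) * ‖g x‖ₑ := by
    rw [decayingSolution, enorm_neg]
    refine (enorm_integral_le_lintegral_enorm _).trans ?_
    rw [← lintegral_indicator measurableSet_Ioi]
    refine lintegral_mono fun x ↦ ?_
    by_cases hx : s < x <;>
      simp [hk, indicator, hx, enorm_smul, Real.enorm_of_nonneg (Real.exp_pos _).le]
  simp only [lineEnergy_zero]
  calc ∫⁻ s, ‖decayingSolution l g s‖ₑ ^ 2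
      ≤ ∫⁻ s, (∫⁻ x, k (x - s) * ‖g x‖ₑ) ^ 2 :=
        lintegral_mono fun s ↦ pow_le_pow_left₀ zero_le (hpointwise s) 2
    _ ≤ ENNReal.ofReal (1 / l) ^ 2 * ∫⁻ x, ‖g x‖ₑ ^ 2 :=
        hk_int ▸ lintegral_sq_lintegral_sub_mul_le hk_meas hg.enorm.measurable
    _ = ENNReal.ofReal (1 / l ^ 2) * ∫⁻ x, ‖g x‖ₑ ^ 2 := by
        rw [← ENNReal.ofReal_pow (by positivity), one_div_pow]

lemma norm_setIntegral_exp_smul_Ioi_add_one_le (hl : 0 < l) (hg : Continuous g)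
    (hfin : lineEnergy 0 g ≠ ⊤) (s : ℝ) :
    ‖∫ x in Ioi (s + 1), Real.exp (-l * (x - s)) • g x‖ ≤
      Real.exp (-l / 2) * (1 / l + (lineEnergy 0 g).toReal) := by
  have hsq := integrable_norm_sq_of_lineEnergy_ne_top hg hfin
  have hexp := integrableOn_exp_neg_mul_sub_Ioi hl s
  calc ‖∫ x in Ioi (s + 1), Real.exp (-l * (x - s)) • g x‖
      ≤ ∫ x in Ioi (s + 1), Real.exp (-l / 2) * (Real.exp (-l * (x - s)) + ‖g x‖ ^ 2) := by
        refine norm_integral_le_of_norm_le (((hexp (s + 1)).add hsq.integrableOn).const_mul _)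
          (ae_restrict_of_forall_mem measurableSet_Ioi fun x hx ↦ ?_)
        rw [norm_smul, Real.norm_of_nonneg (Real.exp_pos _).le]
        simpa using exp_neg_mul_mul_le hl.le (le_sub_iff_add_le'.2 (mem_Ioi.1 hx).le)
          (norm_nonneg (g x))
    _ = Real.exp (-l / 2) * ((∫ x in Ioi (s + 1), Real.exp (-l * (x - s))) +
          ∫ x in Ioi (s + 1), ‖g x‖ ^ 2) := by
        rw [integral_const_mul, integral_add (hexp (s + 1)) hsq.integrableOn]
    _ ≤ Real.exp (-l / 2) * (1 / l + (lineEnergy 0 g).toReal) := by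
        rw [← integral_exp_neg_mul_sub_Ioi hl s, ← integral_norm_sq_eq_toReal_lineEnergy hg]
        refine mul_le_mul_of_nonneg_left (add_le_add ?_ ?_) (Real.exp_pos _).le
        · exact setIntegral_mono_set (hexp s) (Eventually.of_forall fun x ↦ (Real.exp_pos _).le)
            (Ioi_subset_Ioi (by linarith : s ≤ s + 1)).eventuallyLE
        · exact setIntegral_le_integral hsq (Eventually.of_forall fun x ↦ by positivity)

lemma norm_decayingSolution_le (hl : 0 < l) (hg : Continuous g) (hfin : lineEnergy 0 g ≠ ⊤)
    {s B : ℝ} (hB : ∀ x ∈ Icc s (s + 1), ‖g x‖ ≤ B) :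
    ‖decayingSolution l g s‖ ≤ B + Real.exp (-l / 2) * (1 / l + (lineEnergy 0 g).toReal) := by
  have hint := integrableOn_exp_smul_Ioi hl hg hfin s
  have hnear : ‖∫ x in s..s + 1, Real.exp (-l * (x - s)) • g x‖ ≤ B := by
    have := intervalIntegral.norm_integral_le_of_norm_le_const (a := s) (b := s + 1) (C := B)
      (f := fun x ↦ Real.exp (-l * (x - s)) • g x) fun x hx ↦ ?_
    · simpa using this
    · rw [uIoc_of_le (by linarith)] at hx
      have hexp : Real.exp (-l * (x - s)) ≤ 1 := by
        rw [Real.exp_le_one_iff]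
        nlinarith [hx.1]
      rw [norm_smul, Real.norm_of_nonneg (Real.exp_pos _).le]
      exact (mul_le_of_le_one_left (norm_nonneg _) hexp).trans (hB x ⟨hx.1.le, hx.2⟩)
  rw [decayingSolution, norm_neg,
    ← intervalIntegral.integral_interval_add_Ioi (hint s) (hint (s + 1))]
  exact (norm_add_le _ _).trans
    (add_le_add hnear (norm_setIntegral_exp_smul_Ioi_add_one_le hl hg hfin s))

end Pos

/-- `c` is a solution of `c' = μ c + F` obeying the `L²(e^{2δs} ds)`-estimate with the sharp
constant and a weighted pointwise bound in which the influence of `F` from distance `≥ 1` is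
damped by `e^{-|δ + μ|/2}`. -/
structure IsDecayingSolution (δ μ : ℝ) (F c : ℝ → E) : Prop where
  hasDerivAt (s : ℝ) : HasDerivAt c (μ • c s + F s) s
  lineEnergy_le : lineEnergy δ c ≤ ENNReal.ofReal (1 / (δ + μ) ^ 2) * lineEnergy δ F
  norm_le {s B : ℝ} (hB : ∀ x ∈ Icc (s - 1) (s + 1), Real.exp (δ * x) * ‖F x‖ ≤ B) :
    Real.exp (δ * s) * ‖c s‖ ≤
      B + Real.exp (-|δ + μ| / 2) * (1 / |δ + μ| + (lineEnergy δ F).toReal)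

lemma isDecayingSolution_decayingSolution [CompleteSpace E] {l : ℝ} {g : ℝ → E} (hl : 0 < l)
    (hg : Continuous g) (hfin : lineEnergy 0 g ≠ ⊤) :
    IsDecayingSolution 0 l g (decayingSolution l g) where
  hasDerivAt := hasDerivAt_decayingSolution hl hg hfin
  lineEnergy_le := by simpa using lineEnergy_decayingSolution_le hl hg
  norm_le {s B} hB := by
    simpa [abs_of_pos hl] using norm_decayingSolution_le hl hg hfin (s := s) (B := B)
      fun x hx ↦ by simpa using hB x ⟨by linarith [hx.1], hx.2⟩

namespace IsDecayingSolution

variable {δ μ : ℝ} {F c : ℝ → E}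

lemma comp_neg (hc : IsDecayingSolution 0 μ (fun s ↦ -F (-s)) c) :
    IsDecayingSolution 0 (-μ) F fun s ↦ c (-s) := by
  have henergy : lineEnergy 0 (fun s ↦ -F (-s)) = lineEnergy 0 F := by
    rw [← lineEnergy_zero_comp_neg F]
    simp only [lineEnergy_zero, enorm_neg]
  refine ⟨fun s ↦ ?_, ?_, fun {s B} hB ↦ ?_⟩
  · simpa [Function.comp_def] using (hc.hasDerivAt (-s)).scomp s (hasDerivAt_neg s)
  · simpa [lineEnergy_zero_comp_neg, henergy] using hc.lineEnergy_le
  · simpa [henergy] using hc.norm_le (s := -s) (B := B) fun x hx ↦ by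
      simpa using hB (-x) ⟨by linarith [hx.2], by linarith [hx.1]⟩

lemma exp_neg_smul (hc : IsDecayingSolution 0 (δ + μ) (fun s ↦ Real.exp (δ * s) • F s) c) :
    IsDecayingSolution δ μ F fun s ↦ Real.exp (-δ * s) • c s := by
  have hcancel (s : ℝ) : Real.exp (-δ * s) * Real.exp (δ * s) = 1 := by
    rw [← Real.exp_add]
    simp
  refine ⟨fun s ↦ ?_, ?_, fun {s B} hB ↦ ?_⟩
  · refine ((hasDerivAt_exp_mul (-δ) s).smul (hc.hasDerivAt s)).congr_deriv ?_
    rw [smul_add, smul_smul _ _ (F s), hcancel, one_smul]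
    module
  · have h := hc.lineEnergy_le
    rw [lineEnergy_exp_smul, zero_add, zero_add] at h
    rwa [lineEnergy_exp_smul, add_neg_cancel]
  · have h := hc.norm_le (s := s) (B := B) fun x hx ↦ by
      simpa [norm_smul] using hB x hx
    rw [lineEnergy_exp_smul, zero_add, zero_add, zero_mul, Real.exp_zero, one_mul] at h
    rwa [norm_smul, Real.norm_of_nonneg (Real.exp_pos _).le, ← mul_assoc, mul_comm (Real.exp _),
      hcancel, one_mul]

end IsDecayingSolution

lemma exists_isDecayingSolution_zero [CompleteSpace E] {μ : ℝ} {F : ℝ → E} (hμ : μ ≠ 0)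
    (hF : Continuous F) (hfin : lineEnergy 0 F ≠ ⊤) : ∃ c, IsDecayingSolution 0 μ F c := by
  rcases hμ.lt_or_gt with hneg | hpos
  · have hfin' : lineEnergy 0 (fun s ↦ -F (-s)) ≠ ⊤ := by
      rw [lineEnergy_zero_comp_neg fun s ↦ -F s]
      simpa only [lineEnergy, enorm_neg] using hfin
    have hsol := isDecayingSolution_decayingSolution (neg_pos.2 hneg)
      (hF.comp continuous_neg).neg hfin'
    exact ⟨_, neg_neg μ ▸ hsol.comp_neg⟩
  · exact ⟨_, isDecayingSolution_decayingSolution hpos hF hfin⟩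

theorem exists_isDecayingSolution [CompleteSpace E] {δ μ : ℝ} {F : ℝ → E} (hμ : δ + μ ≠ 0)
    (hF : Continuous F) (hfin : lineEnergy δ F ≠ ⊤) : ∃ c, IsDecayingSolution δ μ F c := by
  obtain ⟨c, hc⟩ := exists_isDecayingSolution_zero (F := fun s ↦ Real.exp (δ * s) • F s) hμ
    (by fun_prop) (by rwa [lineEnergy_exp_smul, zero_add])
  exact ⟨_, hc.exp_neg_smul⟩

lemma lintegral_exp_mul_eq_top (a : ℝ) : ∫⁻ s, ENNReal.ofReal (Real.exp (a * s)) = ⊤ := by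
  -- up to a reflection `a * s ≥ 0` on `(0, ∞)`, a set of infinite measure
  wlog ha : 0 ≤ a generalizing a
  · rw [← this (-a) (by linarith), ← lintegral_neg_eq_self]
    simp
  refine top_unique ?_
  calc (⊤ : ℝ≥0∞) = ∫⁻ _ in Ioi (0 : ℝ), 1 := by simp
    _ ≤ ∫⁻ s in Ioi (0 : ℝ), ENNReal.ofReal (Real.exp (a * s)) := by
        refine setLIntegral_mono' measurableSet_Ioi fun s hs ↦ ?_
        rw [ENNReal.one_le_ofReal]
        exact Real.one_le_exp (mul_nonneg ha (mem_Ioi.1 hs).le)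
    _ ≤ ∫⁻ s, ENNReal.ofReal (Real.exp (a * s)) := setLIntegral_le_lintegral _ _

lemma eq_zero_of_hasDerivAt_smul_of_lineEnergy_ne_top {δ μ : ℝ} {c : ℝ → E}
    (hc : ∀ s, HasDerivAt c (μ • c s) s) (hfin : lineEnergy δ c ≠ ⊤) : c = 0 := by
  obtain ⟨v, hv⟩ : ∃ v, ∀ s, Real.exp (-μ * s) • c s = v := by
    have hderiv (s : ℝ) : HasDerivAt (fun s ↦ Real.exp (-μ * s) • c s) 0 s :=
      ((hasDerivAt_exp_mul (-μ) s).smul (hc s)).congr_deriv (by module)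
    exact ⟨_, fun s ↦ is_const_of_deriv_eq_zero (fun s ↦ (hderiv s).differentiableAt)
      (fun s ↦ (hderiv s).deriv) s 0⟩
  have henergy : lineEnergy (δ + μ) (fun _ ↦ v) = lineEnergy δ c := by
    rw [← funext hv, lineEnergy_exp_smul, add_neg_cancel_right]
  rw [lineEnergy, lintegral_const_mul _ (by fun_prop), lintegral_exp_mul_eq_top] at henergy
  have hv0 : v = 0 := by
    by_contra hne
    exact hfin (henergy ▸ ENNReal.mul_top (by simpa using hne))
  funext s
  simpa [hv0] using hv s

end LinearODE

section RapidDecay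

variable {E : Type*} [NormedAddCommGroup E]

/-- Faster than polynomial decay in the frequency `m`, locally uniformly in `s`. -/
def RapidDecay (c : ℤ → ℝ → E) : Prop :=
  ∀ (R : ℝ) (b : ℕ), ∃ C, ∀ (m : ℤ) (s : ℝ), |s| ≤ R → (1 + |(m : ℝ)|) ^ b * ‖c m s‖ ≤ C

lemma summable_one_div_one_add_abs_int_sq : Summable fun m : ℤ ↦ 1 / (1 + |(m : ℝ)|) ^ 2 := by
  refine Summable.of_norm_bounded_eventually
    (Real.summable_one_div_int_pow.2 (one_lt_two : 1 < 2)) ?_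
  filter_upwards [(finite_singleton (0 : ℤ)).compl_mem_cofinite] with m hm
  have hm' : (m : ℝ) ≠ 0 := Int.cast_ne_zero.2 (by simpa using hm)
  rw [Real.norm_of_nonneg (by positivity), ← sq_abs (m : ℝ)]
  gcongr
  linarith

namespace RapidDecay

variable {c d : ℤ → ℝ → E}

lemma add (hc : RapidDecay c) (hd : RapidDecay d) : RapidDecay fun m s ↦ c m s + d m s := by
  intro R b
  obtain ⟨C, hC⟩ := hc R b
  obtain ⟨D, hD⟩ := hd R b
  refine ⟨C + D, fun m s hs ↦ ?_⟩
  calc (1 + |(m : ℝ)|) ^ b * ‖c m s + d m s‖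
      ≤ (1 + |(m : ℝ)|) ^ b * (‖c m s‖ + ‖d m s‖) := by
        gcongr
        exact norm_add_le _ _
    _ ≤ C + D := by
        rw [mul_add]
        exact add_le_add (hC m s hs) (hD m s hs)

lemma smul_of_norm_le {𝕜 : Type*} [NormedField 𝕜] [NormedSpace 𝕜 E] (hc : RapidDecay c)
    {a : ℤ → 𝕜} {A : ℝ} (ha : ∀ m, ‖a m‖ ≤ A * (1 + |(m : ℝ)|)) :
    RapidDecay fun m s ↦ a m • c m s := by
  have hA : 0 ≤ A := by simpa using (norm_nonneg _).trans (ha 0)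
  intro R b
  obtain ⟨C, hC⟩ := hc R (b + 1)
  refine ⟨A * C, fun m s hs ↦ ?_⟩
  calc (1 + |(m : ℝ)|) ^ b * ‖a m • c m s‖
      ≤ (1 + |(m : ℝ)|) ^ b * (A * (1 + |(m : ℝ)|) * ‖c m s‖) := by
        rw [norm_smul]
        gcongr
        exact ha m
    _ = A * ((1 + |(m : ℝ)|) ^ (b + 1) * ‖c m s‖) := by ring
    _ ≤ A * C := mul_le_mul_of_nonneg_left (hC m s hs) hA

lemma exists_summable_bound (hc : RapidDecay c) (R : ℝ) :
    ∃ w : ℤ → ℝ, Summable w ∧ ∀ m s, |s| ≤ R → ‖c m s‖ ≤ w m := by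
  obtain ⟨C, hC⟩ := hc R 2
  refine ⟨_, summable_one_div_one_add_abs_int_sq.mul_left C, fun m s hs ↦ ?_⟩
  rw [mul_one_div, le_div_iff₀ (by positivity), mul_comm]
  exact hC m s hs

lemma summable [CompleteSpace E] (hc : RapidDecay c) (s : ℝ) : Summable fun m ↦ c m s := by
  obtain ⟨w, hw, hbound⟩ := hc.exists_summable_bound |s|
  exact Summable.of_norm_bounded hw fun m ↦ hbound m s le_rfl

end RapidDecay

/-- A sequence of smooth functions all of whose derivatives decay rapidly in the frequency: the
Fourier coefficients of smooth functions on the cylinder. -/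
structure SmoothRapidDecay [NormedSpace ℝ E] (c : ℤ → ℝ → E) : Prop where
  contDiff (m : ℤ) : ContDiff ℝ ∞ (c m)
  decay (a : ℕ) : RapidDecay fun m ↦ iteratedDeriv a (c m)

namespace SmoothRapidDecay

variable [NormedSpace ℝ E] {c F : ℤ → ℝ → E}

lemma rapidDecay (hc : SmoothRapidDecay c) : RapidDecay c := by
  simpa using hc.decay 0

lemma contDiffAt (hc : SmoothRapidDecay c) (m : ℤ) (n : ℕ) (s : ℝ) : ContDiffAt ℝ n (c m) s :=
  (hc.contDiff m).contDiffAt.of_le (by exact_mod_cast le_top)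

lemma hasDerivAt (hc : SmoothRapidDecay c) (m : ℤ) (s : ℝ) :
    HasDerivAt (c m) (_root_.deriv (c m) s) s :=
  ((hc.contDiff m).differentiable (by simp) s).hasDerivAt

lemma deriv (hc : SmoothRapidDecay c) : SmoothRapidDecay fun m ↦ _root_.deriv (c m) where
  contDiff m := (contDiff_infty_iff_deriv.1 (hc.contDiff m)).2
  decay a := by simpa only [iteratedDeriv_succ'] using hc.decay (a + 1)

lemma of_hasDerivAt (hF : SmoothRapidDecay F) (hc : RapidDecay c) {μ : ℤ → ℝ} {A : ℝ}
    (hμ : ∀ m, ‖μ m‖ ≤ A * (1 + |(m : ℝ)|))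
    (hderiv : ∀ m s, HasDerivAt (c m) (μ m • c m s + F m s) s) : SmoothRapidDecay c := by
  have hderiv_eq (m : ℤ) : _root_.deriv (c m) = fun s ↦ μ m • c m s + F m s :=
    funext fun s ↦ (hderiv m s).deriv
  have hsmooth (m : ℤ) : ContDiff ℝ ∞ (c m) := by
    refine contDiff_infty.2 fun n ↦ ?_
    induction n with
    | zero =>
      exact contDiff_zero.2 (continuous_iff_continuousAt.2 fun s ↦ (hderiv m s).continuousAt)
    | succ n ih =>
      push_cast
      rw [contDiff_succ_iff_deriv, hderiv_eq]
      exact ⟨fun s ↦ (hderiv m s).differentiableAt, by simp,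
        (contDiff_const.smul ih).add (contDiff_infty.1 (hF.contDiff m) n)⟩
  refine ⟨hsmooth, fun a ↦ ?_⟩
  induction a with
  | zero => simpa using hc
  | succ a ih =>
    convert (ih.smul_of_norm_le hμ).add (hF.decay a) using 2 with m
    funext s
    have hca : ContDiffAt ℝ a (c m) s := (contDiff_infty.1 (hsmooth m) a).contDiffAt
    rw [iteratedDeriv_succ', hderiv_eq,
      iteratedDeriv_fun_add (hca.const_smul (μ m)) (hF.contDiffAt m a s),
      iteratedDeriv_fun_const_smul hca]

end SmoothRapidDecay

/-- The action of `∂_t` on Fourier coefficients. -/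
def freqMul [NormedSpace ℂ E] (c : ℤ → ℝ → E) (m : ℤ) (s : ℝ) : E :=
  (2 * π * Complex.I * m : ℂ) • c m s

lemma norm_two_pi_I_mul_int (m : ℤ) : ‖(2 * π * Complex.I * m : ℂ)‖ = 2 * π * |(m : ℝ)| := by
  simp [abs_of_pos Real.pi_pos]

lemma norm_two_pi_I_mul_int_le (m : ℤ) :
    ‖(2 * π * Complex.I * m : ℂ)‖ ≤ 2 * π * (1 + |(m : ℝ)|) := by
  rw [norm_two_pi_I_mul_int]
  gcongr
  linarith

lemma RapidDecay.freqMul [NormedSpace ℂ E] {c : ℤ → ℝ → E} (hc : RapidDecay c) :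
    RapidDecay (freqMul c) :=
  hc.smul_of_norm_le norm_two_pi_I_mul_int_le

lemma SmoothRapidDecay.freqMul [NormedSpace ℂ E] {c : ℤ → ℝ → E} (hc : SmoothRapidDecay c) :
    SmoothRapidDecay (freqMul c) where
  contDiff m := (hc.contDiff m).const_smul (2 * π * Complex.I * m : ℂ)
  decay a := by
    convert (hc.decay a).freqMul using 2 with m
    funext s
    exact iteratedDeriv_fun_const_smul (hc.contDiffAt m a s) _

lemma exists_pos_forall_le_abs_add_two_pi_mul {δ : ℝ} (hδ : ∀ m : ℤ, δ ≠ 2 * π * m) :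
    ∃ γ > 0, ∀ m : ℤ, γ ≤ |δ + 2 * π * m| := by
  have hscale (m : ℤ) : |δ - 2 * π * m| = 2 * π * |δ / (2 * π) - m| := by
    rw [← abs_of_pos Real.two_pi_pos, ← abs_mul, abs_of_pos Real.two_pi_pos, mul_sub,
      mul_div_cancel₀ _ Real.two_pi_pos.ne']
  refine ⟨|δ - 2 * π * round (δ / (2 * π))|, abs_pos.2 (sub_ne_zero.2 (hδ _)), fun m ↦ ?_⟩
  have hm : δ + 2 * π * m = δ - 2 * π * (-m : ℤ) := by
    push_cast
    ring
  rw [hm, hscale, hscale]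
  exact mul_le_mul_of_nonneg_left (round_le (δ / (2 * π)) (-m)) Real.two_pi_pos.le

lemma pow_mul_exp_neg_abs_add_two_pi_mul_le (δ : ℝ) (b : ℕ) (m : ℤ) :
    (1 + |(m : ℝ)|) ^ b * Real.exp (-|δ + 2 * π * m| / 2) ≤
      b.factorial * Real.exp (1 + |δ| / 2) := by
  have hfreq : 2 * |(m : ℝ)| ≤ |δ| + |δ + 2 * π * m| :=
    calc 2 * |(m : ℝ)| ≤ 2 * π * |(m : ℝ)| := by
          gcongr
          linarith [Real.pi_gt_three]
      _ = |2 * π * (m : ℝ)| := by rw [abs_mul, abs_of_pos Real.two_pi_pos]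
      _ ≤ |δ| + |δ + 2 * π * m| := by simpa [add_comm] using abs_sub (δ + 2 * π * m) δ
  have hpow := Real.pow_div_factorial_le_exp (1 + |(m : ℝ)|) (by positivity) b
  rw [div_le_iff₀' (by positivity)] at hpow
  calc (1 + |(m : ℝ)|) ^ b * Real.exp (-|δ + 2 * π * m| / 2)
      ≤ b.factorial * Real.exp (1 + |(m : ℝ)|) * Real.exp (-|δ + 2 * π * m| / 2) := by gcongr
    _ = b.factorial * Real.exp (1 + |(m : ℝ)| + -|δ + 2 * π * m| / 2) := by
        rw [mul_assoc, ← Real.exp_add]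
    _ ≤ b.factorial * Real.exp (1 + |δ| / 2) := by
        gcongr ?_ * Real.exp ?_
        linarith

lemma exp_le_exp_abs_mul {δ x r : ℝ} (hx : |x| ≤ r) : Real.exp (δ * x) ≤ Real.exp (|δ| * r) := by
  rw [Real.exp_le_exp]
  calc δ * x ≤ |δ| * |x| := (le_abs_self _).trans (abs_mul _ _).le
    _ ≤ |δ| * r := by gcongr

lemma rapidDecay_of_isDecayingSolution [NormedSpace ℝ E] {δ : ℝ} {F c : ℤ → ℝ → E} {M : ℝ}
    (hδ : ∀ m : ℤ, δ ≠ 2 * π * m) (hF : RapidDecay F)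
    (hM : ∀ m, (lineEnergy δ (F m)).toReal ≤ M)
    (hc : ∀ m : ℤ, IsDecayingSolution δ (2 * π * m) (F m) (c m)) : RapidDecay c := by
  obtain ⟨γ, hγ, hgap⟩ := exists_pos_forall_le_abs_add_two_pi_mul hδ
  intro R b
  obtain ⟨C, hC⟩ := hF (R + 1) b
  have hM0 : 0 ≤ M := ENNReal.toReal_nonneg.trans (hM 0)
  refine ⟨Real.exp (|δ| * R) * (Real.exp (|δ| * (R + 1)) * C +
    b.factorial * Real.exp (1 + |δ| / 2) * (1 / γ + M)), fun m s hs ↦ ?_⟩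
  set w := (1 + |(m : ℝ)|) ^ b
  have hwpos : 0 < w := by positivity
  have hlocal (x : ℝ) (hx : x ∈ Icc (s - 1) (s + 1)) :
      Real.exp (δ * x) * ‖F m x‖ ≤ Real.exp (|δ| * (R + 1)) * (C / w) := by
    have hxR : |x| ≤ R + 1 := abs_le.2
      ⟨by linarith [hx.1, (abs_le.1 hs).1], by linarith [hx.2, (abs_le.1 hs).2]⟩
    refine mul_le_mul (exp_le_exp_abs_mul hxR) ?_ (norm_nonneg _) (Real.exp_pos _).le
    rw [le_div_iff₀' hwpos]
    exact hC m x hxR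
  have htail : 1 / |δ + 2 * π * m| + (lineEnergy δ (F m)).toReal ≤ 1 / γ + M :=
    add_le_add (one_div_le_one_div_of_le hγ (hgap m)) (hM m)
  calc w * ‖c m s‖ = Real.exp (δ * -s) * (w * (Real.exp (δ * s) * ‖c m s‖)) := by
        rw [mul_neg, Real.exp_neg]
        field_simp
    _ ≤ Real.exp (|δ| * R) * (w * (Real.exp (|δ| * (R + 1)) * (C / w) +
          Real.exp (-|δ + 2 * π * m| / 2) * (1 / γ + M))) := by
        gcongr ?_ * (w * ?_)
        · exact exp_le_exp_abs_mul (by rwa [abs_neg])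
        · exact ((hc m).norm_le hlocal).trans (by gcongr)
    _ = Real.exp (|δ| * R) * (Real.exp (|δ| * (R + 1)) * C +
          w * Real.exp (-|δ + 2 * π * m| / 2) * (1 / γ + M)) := by
        field_simp
    _ ≤ _ := by
        gcongr _ * (_ + ?_ * _)
        exact pow_mul_exp_neg_abs_add_two_pi_mul_le δ b m

end RapidDecay

section Partials

variable {E : Type*} [NormedAddCommGroup E] [NormedSpace ℝ E] {h : ℝ × ℝ → E}

/-- `h` descends to the cylinder `ℝ × ℝ/ℤ`. -/
def PeriodicSnd {X : Type*} (h : ℝ × ℝ → X) : Prop :=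
  ∀ s t : ℝ, h (s, t + 1) = h (s, t)

lemma PeriodicSnd.sub {X : Type*} [Sub X] {g h : ℝ × ℝ → X} (hg : PeriodicSnd g)
    (hh : PeriodicSnd h) : PeriodicSnd (g - h) := fun s t ↦ by
  rw [Pi.sub_apply, Pi.sub_apply, hg s t, hh s t]

lemma PeriodicSnd.const_smul {X M : Type*} [SMul M X] {h : ℝ × ℝ → X} (hh : PeriodicSnd h) (a : M) :
    PeriodicSnd (a • h) := fun s t ↦ by
  rw [Pi.smul_apply, Pi.smul_apply, hh s t]

lemma PeriodicSnd.fderiv (hper : PeriodicSnd h) : PeriodicSnd (fderiv ℝ h) := by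
  intro s t
  have htranslate : (fun p ↦ h (p + ((0 : ℝ), (1 : ℝ)))) = h := by
    funext ⟨s, t⟩
    simpa using hper s t
  simpa [htranslate] using (fderiv_comp_add_right (𝕜 := ℝ) (f := h) (x := (s, t)) (0, 1)).symm

lemma PeriodicSnd.pdS (hper : PeriodicSnd h) : PeriodicSnd (pdS h) := fun s t ↦ by
  rw [_root_.pdS, hper.fderiv s t, _root_.pdS]

lemma PeriodicSnd.pdT (hper : PeriodicSnd h) : PeriodicSnd (pdT h) := fun s t ↦ by
  rw [_root_.pdT, hper.fderiv s t, _root_.pdT]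

lemma hasDerivAt_pdS (hh : Differentiable ℝ h) (s t : ℝ) :
    HasDerivAt (fun s ↦ h (s, t)) (pdS h (s, t)) s :=
  (hh (s, t)).hasFDerivAt.comp_hasDerivAt s ((hasDerivAt_id s).prodMk (hasDerivAt_const s t))

lemma hasDerivAt_pdT (hh : Differentiable ℝ h) (s t : ℝ) :
    HasDerivAt (fun t ↦ h (s, t)) (pdT h (s, t)) t :=
  (hh (s, t)).hasFDerivAt.comp_hasDerivAt t ((hasDerivAt_const t s).prodMk (hasDerivAt_id t))

lemma continuous_pdS (hh : ContDiff ℝ 1 h) : Continuous (pdS h) :=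
  (hh.continuous_fderiv (by simp)).clm_apply continuous_const

lemma continuous_pdT (hh : ContDiff ℝ 1 h) : Continuous (pdT h) :=
  (hh.continuous_fderiv (by simp)).clm_apply continuous_const

lemma contDiff_pdS (hh : ContDiff ℝ ∞ h) : ContDiff ℝ ∞ (pdS h) :=
  (hh.fderiv_right (by simp)).clm_apply contDiff_const

lemma contDiff_pdT (hh : ContDiff ℝ ∞ h) : ContDiff ℝ ∞ (pdT h) :=
  (hh.fderiv_right (by simp)).clm_apply contDiff_const

lemma pdS_sub {g : ℝ × ℝ → E} (hg : Differentiable ℝ g) (hh : Differentiable ℝ h) :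
    pdS (g - h) = pdS g - pdS h := by
  funext p
  simp [pdS, fderiv_sub (hg p) (hh p)]

lemma pdT_sub {g : ℝ × ℝ → E} (hg : Differentiable ℝ g) (hh : Differentiable ℝ h) :
    pdT (g - h) = pdT g - pdT h := by
  funext p
  simp [pdT, fderiv_sub (hg p) (hh p)]

/-- The differential with partial derivatives `a` and `b`. -/
def fderivOfPartials (a b : E) : ℝ × ℝ →L[ℝ] E :=
  (ContinuousLinearMap.fst ℝ ℝ ℝ).smulRight a + (ContinuousLinearMap.snd ℝ ℝ ℝ).smulRight b

lemma fderivOfPartials_apply (a b : E) (q : ℝ × ℝ) :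
    fderivOfPartials a b q = q.1 • a + q.2 • b := by
  simp [fderivOfPartials]

lemma fderiv_eq_fderivOfPartials (h : ℝ × ℝ → E) :
    fderiv ℝ h = fun p ↦ fderivOfPartials (pdS h p) (pdT h p) := by
  funext p
  refine ContinuousLinearMap.ext fun q ↦ ?_
  rw [fderivOfPartials_apply, pdS, pdT, ← map_smul, ← map_smul, ← map_add]
  simp

lemma norm_fderivOfPartials_le (a b : E) : ‖fderivOfPartials a b‖ ≤ ‖a‖ + ‖b‖ := by
  refine (norm_add_le _ _).trans (add_le_add ?_ ?_) <;>
    rw [ContinuousLinearMap.norm_smulRight_apply]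
  · exact mul_le_of_le_one_left (norm_nonneg _) (ContinuousLinearMap.norm_fst_le ..)
  · exact mul_le_of_le_one_left (norm_nonneg _) (ContinuousLinearMap.norm_snd_le ..)

lemma norm_iteratedFDeriv_pdT_le (hh : ContDiff ℝ ∞ h) (j : ℕ) (p : ℝ × ℝ) :
    ‖iteratedFDeriv ℝ j (pdT h) p‖ ≤ ‖iteratedFDeriv ℝ (j + 1) h p‖ := by
  have hle := norm_iteratedFDeriv_clm_apply_const (𝕜 := ℝ) (c := ((0 : ℝ), (1 : ℝ))) (n := j)
    (hh.fderiv_right (m := ∞) (by simp)).contDiffAt (x := p) (by exact_mod_cast le_top)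
  rw [norm_iteratedFDeriv_fderiv] at hle
  exact hle.trans_eq (by simp [Prod.norm_def])

lemma norm_iteratedFDeriv_smulRight_le {l : ℝ × ℝ →L[ℝ] ℝ} (hl : ‖l‖ ≤ 1) (hh : ContDiff ℝ ∞ h)
    (j : ℕ) (p : ℝ × ℝ) :
    ‖iteratedFDeriv ℝ j (fun p ↦ l.smulRight (h p)) p‖ ≤ ‖iteratedFDeriv ℝ j h p‖ := by
  have hbound : ‖ContinuousLinearMap.smulRightL ℝ (ℝ × ℝ) E l‖ ≤ 1 :=
    ContinuousLinearMap.opNorm_le_bound _ zero_le_one fun z ↦ by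
      rw [ContinuousLinearMap.smulRightL_apply_apply, ContinuousLinearMap.norm_smulRight_apply]
      gcongr
  exact ((ContinuousLinearMap.smulRightL ℝ (ℝ × ℝ) E l).norm_iteratedFDeriv_comp_left
    hh.contDiffAt (by exact_mod_cast le_top)).trans (mul_le_of_le_one_left (norm_nonneg _) hbound)

lemma norm_iteratedFDeriv_succ_le (hh : ContDiff ℝ ∞ h) (j : ℕ) (p : ℝ × ℝ) :
    ‖iteratedFDeriv ℝ (j + 1) h p‖ ≤
      ‖iteratedFDeriv ℝ j (pdS h) p‖ + ‖iteratedFDeriv ℝ j (pdT h) p‖ := by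
  have hS := contDiff_pdS hh
  have hT := contDiff_pdT hh
  have hsplit : fderiv ℝ h = (fun p ↦ (ContinuousLinearMap.fst ℝ ℝ ℝ).smulRight (pdS h p)) +
      fun p ↦ (ContinuousLinearMap.snd ℝ ℝ ℝ).smulRight (pdT h p) := fderiv_eq_fderivOfPartials h
  rw [← norm_iteratedFDeriv_fderiv, hsplit,
    iteratedFDeriv_add (contDiff_const.smulRight (contDiff_infty.1 hS j))
      (contDiff_const.smulRight (contDiff_infty.1 hT j))]
  exact (norm_add_le _ _).trans (add_le_add
    (norm_iteratedFDeriv_smulRight_le (ContinuousLinearMap.norm_fst_le ..) hS j p)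
    (norm_iteratedFDeriv_smulRight_le (ContinuousLinearMap.norm_snd_le ..) hT j p))

lemma pdS_pdT (hh : ContDiff ℝ 2 h) : pdS (pdT h) = pdT (pdS h) := by
  have hdiff : Differentiable ℝ (fderiv ℝ h) :=
    (hh.fderiv_right (m := 1) (by norm_num)).differentiable (by simp)
  have happly (v w p : ℝ × ℝ) :
      fderiv ℝ (fun p ↦ fderiv ℝ h p v) p w = fderiv ℝ (fderiv ℝ h) p w v := by
    simp [fderiv_clm_apply (hdiff p) (differentiableAt_const v)]
  funext p
  calc fderiv ℝ (fun p ↦ fderiv ℝ h p (0, 1)) p (1, 0)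
      = fderiv ℝ (fderiv ℝ h) p (1, 0) (0, 1) := happly _ _ _
    _ = fderiv ℝ (fderiv ℝ h) p (0, 1) (1, 0) :=
        hh.contDiffAt.isSymmSndFDerivAt (by simp) _ _
    _ = fderiv ℝ (fun p ↦ fderiv ℝ h p (1, 0)) p (0, 1) := (happly _ _ _).symm

end Partials

section Dbar

variable {E : Type*} [NormedAddCommGroup E] [NormedSpace ℂ E] {u v : ℝ × ℝ → E}

lemma PeriodicSnd.dbar (hper : PeriodicSnd u) : PeriodicSnd (dbar u) := fun s t ↦ by
  rw [_root_.dbar, _root_.dbar, hper.pdS s t, hper.pdT s t]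

lemma continuous_dbar_s11 (hu : ContDiff ℝ 1 u) : Continuous (dbar u) :=
  ((continuous_pdS hu).add ((continuous_pdT hu).const_smul Complex.I)).const_smul (2⁻¹ : ℝ)

lemma contDiff_dbar (hu : ContDiff ℝ ∞ u) : ContDiff ℝ ∞ (dbar u) :=
  ((contDiff_pdS hu).add ((contDiff_pdT hu).const_smul Complex.I)).const_smul (2⁻¹ : ℝ)

lemma pdS_eq_dbar_sub_pdT (u : ℝ × ℝ → E) (p : ℝ × ℝ) :
    pdS u p = (2 : ℝ) • dbar u p - Complex.I • pdT u p := by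
  rw [dbar, smul_smul]
  norm_num

lemma dbar_sub (hu : Differentiable ℝ u) (hv : Differentiable ℝ v) :
    dbar (u - v) = dbar u - dbar v := by
  funext p
  simp only [dbar, pdS_sub hu hv, pdT_sub hu hv, Pi.sub_apply]
  module

lemma dbar_pdT (hu : ContDiff ℝ 2 u) : dbar (pdT u) = pdT (dbar u) := by
  have hfderiv : ContDiff ℝ 1 (fderiv ℝ u) := hu.fderiv_right (by norm_num)
  have hS : Differentiable ℝ (pdS u) :=
    (hfderiv.clm_apply contDiff_const).differentiable (by simp)
  have hT : Differentiable ℝ (pdT u) :=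
    (hfderiv.clm_apply contDiff_const).differentiable (by simp)
  funext p
  have hderiv : HasFDerivAt (dbar u)
      ((2⁻¹ : ℝ) • (fderiv ℝ (pdS u) p + Complex.I • fderiv ℝ (pdT u) p)) p :=
    ((hS p).hasFDerivAt.add ((hT p).hasFDerivAt.const_smul Complex.I)).const_smul (2⁻¹ : ℝ)
  rw [dbar, pdS_pdT hu, pdT, pdT, pdT, hderiv.fderiv]
  rfl

lemma norm_iteratedFDeriv_pdS_le (hu : ContDiff ℝ ∞ u) (j : ℕ) (p : ℝ × ℝ) :
    ‖iteratedFDeriv ℝ j (pdS u) p‖ ≤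
      2 * ‖iteratedFDeriv ℝ j (dbar u) p‖ + ‖iteratedFDeriv ℝ j (pdT u) p‖ := by
  have hdbar : ContDiff ℝ j (dbar u) := contDiff_infty.1 (contDiff_dbar hu) j
  have hT : ContDiff ℝ j (pdT u) := contDiff_infty.1 (contDiff_pdT hu) j
  have hsplit : pdS u = (2 : ℝ) • dbar u + (-Complex.I) • pdT u := by
    funext p
    simp [pdS_eq_dbar_sub_pdT, sub_eq_add_neg]
  have hdbar_smul : ContDiff ℝ j ((2 : ℝ) • dbar u) := hdbar.const_smul (2 : ℝ)
  have hT_smul : ContDiff ℝ j ((-Complex.I) • pdT u) := hT.const_smul (-Complex.I)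
  rw [hsplit, iteratedFDeriv_add hdbar_smul hT_smul]
  refine (norm_add_le _ _).trans_eq ?_
  rw [iteratedFDeriv_const_smul_apply hdbar.contDiffAt,
    iteratedFDeriv_const_smul_apply hT.contDiffAt, norm_smul, norm_smul]
  simp

lemma norm_iteratedFDeriv_succ_le_dbar (hu : ContDiff ℝ ∞ u) (j : ℕ) (p : ℝ × ℝ) :
    ‖iteratedFDeriv ℝ (j + 1) u p‖ ≤
      2 * (‖iteratedFDeriv ℝ j (dbar u) p‖ + ‖iteratedFDeriv ℝ j (pdT u) p‖) := by
  linarith [norm_iteratedFDeriv_succ_le hu j p, norm_iteratedFDeriv_pdS_le hu j p]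

end Dbar

section Mode

variable {E : Type*} [NormedAddCommGroup E] [NormedSpace ℂ E] {h : ℝ × ℝ → E}

lemma norm_fourier_apply {T : ℝ} (m : ℤ) (x : AddCircle T) : ‖fourier m x‖ = 1 :=
  Circle.norm_coe _

/-- The `m`-th Fourier coefficient of `t ↦ h (s, t)`, as a function of `s`. -/
def mode (h : ℝ × ℝ → E) (m : ℤ) (s : ℝ) : E :=
  ∫ t in (0 : ℝ)..1, fourier (-m) (t : UnitAddCircle) • h (s, t)

lemma continuous_mode (hh : Continuous h) (m : ℤ) : Continuous (mode h m) :=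
  intervalIntegral.continuous_parametric_intervalIntegral_of_continuous' (by fun_prop) 0 1

lemma norm_mode_le {m : ℤ} {s B : ℝ} (hB : ∀ t ∈ Icc (0 : ℝ) 1, ‖h (s, t)‖ ≤ B) :
    ‖mode h m s‖ ≤ B := by
  have hle := intervalIntegral.norm_integral_le_of_norm_le_const (a := 0) (b := 1) (C := B)
    (f := fun t : ℝ ↦ fourier (-m) (t : UnitAddCircle) • h (s, t)) fun t ht ↦ by
      rw [uIoc_of_le zero_le_one] at ht
      rw [norm_smul, norm_fourier_apply, one_mul]
      exact hB t (Ioc_subset_Icc_self ht)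
  simpa [mode] using hle

lemma mode_sub {g : ℝ × ℝ → E} (hg : Continuous g) (hh : Continuous h) (m : ℤ) (s : ℝ) :
    mode (g - h) m s = mode g m s - mode h m s := by
  simp only [mode, Pi.sub_apply, smul_sub]
  exact intervalIntegral.integral_sub (Continuous.intervalIntegrable (by fun_prop) _ _)
    (Continuous.intervalIntegrable (by fun_prop) _ _)

lemma mode_const_smul (a : ℂ) (h : ℝ × ℝ → E) (m : ℤ) (s : ℝ) :
    mode (a • h) m s = a • mode h m s := by
  simp only [mode, Pi.smul_apply, smul_comm _ a]
  exact intervalIntegral.integral_smul a _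

lemma hasDerivAt_mode (hh : ContDiff ℝ 1 h) (m : ℤ) (s : ℝ) :
    HasDerivAt (mode h m) (mode (pdS h) m s) s := by
  have hcont := hh.continuous
  have hS := continuous_pdS hh
  obtain ⟨C, hC⟩ := ((isCompact_Icc (a := s - 1) (b := s + 1)).prod
    (isCompact_Icc (a := (0 : ℝ)) (b := 1))).exists_bound_of_continuousOn hS.continuousOn
  refine (intervalIntegral.hasDerivAt_integral_of_dominated_loc_of_deriv_le
    (F := fun s t ↦ fourier (-m) (t : UnitAddCircle) • h (s, t))
    (F' := fun s t ↦ fourier (-m) (t : UnitAddCircle) • pdS h (s, t))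
    (bound := fun _ ↦ C) (Icc_mem_nhds (by linarith : s - 1 < s) (by linarith : s < s + 1))
    (Eventually.of_forall fun x ↦ Continuous.aestronglyMeasurable (by fun_prop))
    (Continuous.intervalIntegrable (by fun_prop) _ _)
    (Continuous.aestronglyMeasurable (by fun_prop))
    (Eventually.of_forall fun t ht x hx ↦ ?_) (by simp)
    (Eventually.of_forall fun t _ x _ ↦
      (hasDerivAt_pdS (hh.differentiable (by simp)) x t).const_smul _)).2
  rw [uIoc_of_le zero_le_one] at ht
  rw [norm_smul, norm_fourier_apply, one_mul]
  exact hC (x, t) ⟨hx, Ioc_subset_Icc_self ht⟩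

lemma deriv_mode (hh : ContDiff ℝ 1 h) (m : ℤ) :
    deriv (mode h m) = mode (pdS h) m :=
  funext fun s ↦ (hasDerivAt_mode hh m s).deriv

lemma hasDerivAt_fourier_one (m : ℤ) (t : ℝ) :
    HasDerivAt (fun t : ℝ ↦ fourier m (t : UnitAddCircle))
      ((2 * π * Complex.I * m : ℂ) * fourier m (t : UnitAddCircle)) t := by
  simpa using hasDerivAt_fourier 1 m t

lemma mode_pdT [CompleteSpace E] (hh : ContDiff ℝ 1 h) (hper : PeriodicSnd h) :
    mode (pdT h) = freqMul (mode h) := by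
  funext m s
  have hT := continuous_pdT hh
  have hbyparts := intervalIntegral.integral_smul_deriv_eq_deriv_smul (a := 0) (b := 1)
    (fun t _ ↦ hasDerivAt_fourier_one (-m) t)
    (fun t _ ↦ hasDerivAt_pdT (hh.differentiable (by simp)) s t)
    (Continuous.intervalIntegrable (by fun_prop) _ _)
    (Continuous.intervalIntegrable (by fun_prop) _ _)
  have hends : h (s, 1) = h (s, 0) := by simpa using hper s 0
  have hone : ((1 : ℝ) : UnitAddCircle) = ((0 : ℝ) : UnitAddCircle) := by
    simp [AddCircle.coe_period]
  rw [hends, hone, sub_self, zero_sub] at hbyparts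
  rw [mode, hbyparts, freqMul, mode, ← intervalIntegral.integral_smul,
    ← intervalIntegral.integral_neg]
  simp only [mul_smul, Int.cast_neg, mul_neg, neg_smul, neg_neg]

lemma hasDerivAt_mode_of_dbar [CompleteSpace E] (hh : ContDiff ℝ 1 h) (hper : PeriodicSnd h)
    (m : ℤ) (s : ℝ) :
    HasDerivAt (mode h m) ((2 * π * m : ℝ) • mode h m s + mode ((2 : ℝ) • dbar h) m s) s := by
  have hsplit : pdS h = (2 : ℝ) • dbar h - Complex.I • pdT h := funext (pdS_eq_dbar_sub_pdT h)
  have hcoef : -(Complex.I * (2 * π * Complex.I * m)) = ((2 * π * m : ℝ) : ℂ) := by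
    push_cast
    linear_combination (-2 * π * m : ℂ) * Complex.I_mul_I
  refine (hasDerivAt_mode hh m s).congr_deriv ?_
  rw [hsplit, mode_sub ((continuous_dbar_s11 hh).const_smul _) ((continuous_pdT hh).const_smul _),
    mode_const_smul, mode_pdT hh hper, freqMul, smul_smul, sub_eq_neg_add, ← neg_smul, hcoef,
    Complex.coe_smul]

lemma contDiff_mode (hh : ContDiff ℝ ∞ h) (m : ℤ) :
    ContDiff ℝ ∞ (mode h m) := by
  refine contDiff_infty.2 fun n ↦ ?_
  induction n generalizing h with
  | zero => exact contDiff_zero.2 (continuous_mode hh.continuous m)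
  | succ n ih =>
    have hh1 : ContDiff ℝ 1 h := contDiff_infty.1 hh 1
    push_cast
    rw [contDiff_succ_iff_deriv, deriv_mode hh1]
    exact ⟨fun s ↦ (hasDerivAt_mode hh1 m s).differentiableAt, by simp, ih (contDiff_pdS hh)⟩

lemma rapidDecay_mode [CompleteSpace E] (hh : ContDiff ℝ ∞ h) (hper : PeriodicSnd h) :
    RapidDecay (mode h) := by
  intro R b
  induction b generalizing h with
  | zero =>
    obtain ⟨C, hC⟩ := ((isCompact_Icc (a := -R) (b := R)).prod
      (isCompact_Icc (a := (0 : ℝ)) (b := 1))).exists_bound_of_continuousOn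
        hh.continuous.continuousOn
    refine ⟨C, fun m s hs ↦ ?_⟩
    rw [pow_zero, one_mul]
    exact norm_mode_le fun t ht ↦ hC (s, t) ⟨abs_le.1 hs, ht⟩
  | succ b ih =>
    obtain ⟨C, hC⟩ := ih hh hper
    obtain ⟨D, hD⟩ := ih (contDiff_pdT hh) hper.pdT
    refine ⟨C + D, fun m s hs ↦ ?_⟩
    have hfreq : |(m : ℝ)| * ‖mode h m s‖ ≤ ‖mode (pdT h) m s‖ := by
      rw [mode_pdT (contDiff_infty.1 hh 1) hper, freqMul, norm_smul, norm_two_pi_I_mul_int]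
      gcongr
      exact le_mul_of_one_le_left (abs_nonneg _) (by linarith [Real.pi_gt_three])
    calc (1 + |(m : ℝ)|) ^ (b + 1) * ‖mode h m s‖
        = (1 + |(m : ℝ)|) ^ b * (‖mode h m s‖ + |(m : ℝ)| * ‖mode h m s‖) := by ring
      _ ≤ (1 + |(m : ℝ)|) ^ b * (‖mode h m s‖ + ‖mode (pdT h) m s‖) := by gcongr
      _ ≤ C + D := by
        rw [mul_add]
        exact add_le_add (hC m s hs) (hD m s hs)

lemma smoothRapidDecay_mode [CompleteSpace E] (hh : ContDiff ℝ ∞ h) (hper : PeriodicSnd h) :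
    SmoothRapidDecay (mode h) where
  contDiff := contDiff_mode hh
  decay a := by
    induction a generalizing h with
    | zero => simpa using rapidDecay_mode hh hper
    | succ a ih =>
      simpa only [iteratedDeriv_succ', deriv_mode (contDiff_infty.1 hh 1)]
        using ih (contDiff_pdS hh) hper.pdS

lemma mode_eq_fourierCoeffOn (h : ℝ × ℝ → E) (m : ℤ) (s : ℝ) :
    mode h m s = fourierCoeffOn zero_lt_one (fun t ↦ h (s, t)) m := by
  rw [fourierCoeffOn_eq_integral]
  simp only [sub_zero, div_one, one_smul, mode]
  refine intervalIntegral.integral_congr fun t _ ↦ ?_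
  simp only [fourier_coe_apply, sub_zero]

lemma lintegral_enorm_sq_eq_tsum_mode {h : ℝ × ℝ → ℂ} (hh : Continuous h) (s : ℝ) :
    ∫⁻ t in Icc (0 : ℝ) 1, ‖h (s, t)‖ₑ ^ 2 = ∑' m, ‖mode h m s‖ₑ ^ 2 := by
  have hL2 : MemLp (fun t ↦ h (s, t)) 2 (volume.restrict (Ioc (0 : ℝ) 1)) := by
    rw [memLp_two_iff_integrable_sq_norm (by fun_prop)]
    exact (Continuous.integrableOn_Icc (by fun_prop)).mono_set Ioc_subset_Icc_self
  have hparseval := hasSum_sq_fourierCoeffOn zero_lt_one hL2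
  simp only [sub_zero, inv_one, one_smul, ← mode_eq_fourierCoeffOn] at hparseval
  simp only [enorm_sq_eq_ofReal]
  rw [← ENNReal.ofReal_tsum_of_nonneg (fun m ↦ by positivity) hparseval.summable,
    hparseval.tsum_eq, intervalIntegral.integral_of_le zero_le_one,
    ← integral_Icc_eq_integral_Ioc,
    ofReal_integral_eq_lintegral_ofReal (Continuous.integrableOn_Icc (by fun_prop))
      (Eventually.of_forall fun t ↦ by positivity)]

lemma hasSum_fourier_smul_mode {h : ℝ × ℝ → ℂ} (hh : Continuous h) (hper : PeriodicSnd h)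
    {s : ℝ} (hsum : Summable fun m ↦ mode h m s) (t : ℝ) :
    HasSum (fun m ↦ fourier m (t : UnitAddCircle) • mode h m s) (h (s, t)) := by
  have hperiodic : Function.Periodic (fun t ↦ h (s, t)) 1 := hper s
  let g : C(UnitAddCircle, ℂ) :=
    ⟨hperiodic.lift, continuous_coinduced_dom.2 (show Continuous fun t ↦ h (s, t) by fun_prop)⟩
  have hcoeff : fourierCoeff g = fun m ↦ mode h m s := by
    funext m
    rw [fourierCoeff_eq_intervalIntegral _ _ 0]
    simp [mode, g]
  have hseries : HasSum (fun m ↦ fourierCoeff g m • fourier m (t : UnitAddCircle)) (h (s, t)) :=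
    has_pointwise_sum_fourier_series_of_summable (hcoeff ▸ hsum) (t : UnitAddCircle)
  simpa only [hcoeff, smul_eq_mul, mul_comm] using hseries

end Mode

section ModeSeries

variable {E : Type*} [NormedAddCommGroup E] [NormedSpace ℂ E] {c c' : ℤ → ℝ → E}

/-- The function on the cylinder with Fourier coefficients `c`; zero at the points where the series
is not summable. -/
def modeSeries (c : ℤ → ℝ → E) (p : ℝ × ℝ) : E :=
  ∑' m, fourier m (p.2 : UnitAddCircle) • c m p.1

lemma periodicSnd_modeSeries (c : ℤ → ℝ → E) : PeriodicSnd (modeSeries c) := fun s t ↦ by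
  simp only [modeSeries, AddCircle.coe_add_period]

lemma modeSeries_mode {h : ℝ × ℝ → ℂ} (hh : ContDiff ℝ ∞ h) (hper : PeriodicSnd h) :
    modeSeries (mode h) = h :=
  funext fun p ↦ (hasSum_fourier_smul_mode hh.continuous hper
    ((rapidDecay_mode hh hper).summable p.1) p.2).tsum_eq

lemma hasFDerivAt_fourier_smul {m : ℤ} {c : ℝ → E} {c' : E} {p : ℝ × ℝ}
    (hc : HasDerivAt c c' p.1) :
    HasFDerivAt (fun p : ℝ × ℝ ↦ fourier m (p.2 : UnitAddCircle) • c p.1)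
      (fderivOfPartials (fourier m (p.2 : UnitAddCircle) • c')
        (fourier m (p.2 : UnitAddCircle) • (2 * π * Complex.I * m : ℂ) • c p.1)) p := by
  have hfst := hc.hasFDerivAt.comp p (hasFDerivAt_fst (𝕜 := ℝ) (p := p))
  have hsnd := (hasDerivAt_fourier_one m p.2).hasFDerivAt.comp p
    (hasFDerivAt_snd (𝕜 := ℝ) (p := p))
  refine (hsnd.smul hfst).congr_fderiv (ContinuousLinearMap.ext fun q ↦ ?_)
  simp only [fderivOfPartials_apply, Function.comp_apply, add_apply, smul_apply,
    ContinuousLinearMap.comp_apply, ContinuousLinearMap.coe_fst', ContinuousLinearMap.coe_snd',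
    ContinuousLinearMap.toSpanSingleton_apply, ContinuousLinearMap.smulRight_apply,
    Complex.real_smul]
  module

variable [CompleteSpace E]

lemma RapidDecay.hasSum_modeSeries (hc : RapidDecay c) (p : ℝ × ℝ) :
    HasSum (fun m ↦ fourier m (p.2 : UnitAddCircle) • c m p.1) (modeSeries c p) := by
  obtain ⟨w, hw, hbound⟩ := hc.exists_summable_bound |p.1|
  refine (Summable.of_norm_bounded hw fun m ↦ ?_).hasSum
  rw [norm_smul, norm_fourier_apply, one_mul]
  exact hbound m p.1 le_rfl

lemma RapidDecay.hasFDerivAt_modeSeries (hc : RapidDecay c) (hc' : RapidDecay c')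
    (hderiv : ∀ m s, HasDerivAt (c m) (c' m s) s) (p : ℝ × ℝ) :
    HasFDerivAt (modeSeries c)
      (fderivOfPartials (modeSeries c' p) (modeSeries (_root_.freqMul c) p)) p := by
  obtain ⟨v, hv, hc'_le⟩ := hc'.exists_summable_bound (|p.1| + 1)
  obtain ⟨w, hw, hfreq_le⟩ := hc.freqMul.exists_summable_bound (|p.1| + 1)
  let strip : Set (ℝ × ℝ) := Ioo (-(|p.1| + 1)) (|p.1| + 1) ×ˢ univ
  have hp : p ∈ strip := ⟨abs_lt.1 (by linarith), mem_univ _⟩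
  have hterm_le (m : ℤ) (x : ℝ × ℝ) (hx : x ∈ strip) :
      ‖fderivOfPartials (fourier m (x.2 : UnitAddCircle) • c' m x.1)
        (fourier m (x.2 : UnitAddCircle) • _root_.freqMul c m x.1)‖ ≤ v m + w m := by
    have hx1 : |x.1| ≤ |p.1| + 1 := (abs_lt.2 hx.1).le
    refine (norm_fderivOfPartials_le _ _).trans ?_
    simp only [norm_smul, norm_fourier_apply, one_mul]
    exact add_le_add (hc'_le m x.1 hx1) (hfreq_le m x.1 hx1)
  refine (hasFDerivAt_tsum_of_isPreconnected (hv.add hw) (isOpen_Ioo.prod isOpen_univ)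
    (isPreconnected_Ioo.prod isPreconnected_univ)
    (fun m x _ ↦ hasFDerivAt_fourier_smul (hderiv m x.1)) hterm_le hp
    (hc.hasSum_modeSeries p).summable hp).congr_fderiv (HasSum.tsum_eq ?_)
  exact ((ContinuousLinearMap.smulRightL ℝ (ℝ × ℝ) E (.fst ℝ ℝ ℝ)).hasSum
    (hc'.hasSum_modeSeries p)).add
    ((ContinuousLinearMap.smulRightL ℝ (ℝ × ℝ) E (.snd ℝ ℝ ℝ)).hasSum
      (hc.freqMul.hasSum_modeSeries p))

lemma SmoothRapidDecay.hasFDerivAt_modeSeries (hc : SmoothRapidDecay c) (p : ℝ × ℝ) :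
    HasFDerivAt (modeSeries c)
      (fderivOfPartials (modeSeries (fun m ↦ _root_.deriv (c m)) p)
        (modeSeries (_root_.freqMul c) p)) p :=
  hc.rapidDecay.hasFDerivAt_modeSeries hc.deriv.rapidDecay hc.hasDerivAt p

lemma SmoothRapidDecay.contDiff_modeSeries (hc : SmoothRapidDecay c) :
    ContDiff ℝ ∞ (modeSeries c) := by
  refine contDiff_infty.2 fun n ↦ ?_
  induction n generalizing c with
  | zero =>
    exact contDiff_zero.2 (continuous_iff_continuousAt.2 fun p ↦
      (hc.hasFDerivAt_modeSeries p).continuousAt)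
  | succ n ih =>
    push_cast
    rw [contDiff_succ_iff_fderiv, funext fun p ↦ (hc.hasFDerivAt_modeSeries p).fderiv]
    exact ⟨fun p ↦ (hc.hasFDerivAt_modeSeries p).differentiableAt, by simp,
      (contDiff_const.smulRight (ih hc.deriv)).add (contDiff_const.smulRight (ih hc.freqMul))⟩

lemma integral_fourier_neg_mul_fourier (m n : ℤ) :
    ∫ t in (0 : ℝ)..1, fourier (-m) (t : UnitAddCircle) * fourier n (t : UnitAddCircle) =
      (Pi.single n 1 : ℤ → ℂ) m := by
  simpa [fourierCoeff_eq_intervalIntegral _ _ 0] using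
    congrFun (fourierCoeff_fourier (T := 1) n) m

lemma mode_modeSeries (hc : RapidDecay c) : mode (modeSeries c) = c := by
  funext m s
  obtain ⟨w, hw, hbound⟩ := hc.exists_summable_bound |s|
  have hsum := intervalIntegral.hasSum_integral_of_dominated_convergence (μ := volume)
    (a := 0) (b := 1)
    (F := fun n t ↦ fourier (-m) (t : UnitAddCircle) • fourier n (t : UnitAddCircle) • c n s)
    (f := fun t ↦ fourier (-m) (t : UnitAddCircle) • modeSeries c (s, t))
    (fun n _ ↦ w n) (fun n ↦ Continuous.aestronglyMeasurable (by fun_prop))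
    (fun n ↦ Eventually.of_forall fun t _ ↦ by
      simpa only [norm_smul, norm_fourier_apply, one_mul] using hbound n s le_rfl)
    (Eventually.of_forall fun t _ ↦ hw) (by simp)
    (Eventually.of_forall fun t _ ↦ (hc.hasSum_modeSeries (s, t)).const_smul _)
  refine hsum.unique ?_
  simp only [← mul_smul, intervalIntegral.integral_smul_const, integral_fourier_neg_mul_fourier]
  convert hasSum_single m fun n hn ↦ ?_ using 1
  · simp
  · simp [Pi.single_eq_of_ne hn.symm]

lemma two_smul_dbar_modeSeries {c F : ℤ → ℝ → ℂ} (hc : SmoothRapidDecay c)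
    (hderiv : ∀ m s, HasDerivAt (c m) ((2 * π * m : ℝ) • c m s + F m s) s) :
    (2 : ℝ) • dbar (modeSeries c) = modeSeries F := by
  have hsmooth := hc.contDiff_modeSeries
  have hper := periodicSnd_modeSeries c
  have hmode : mode ((2 : ℝ) • dbar (modeSeries c)) = F := by
    funext m s
    have hderiv_mode := hasDerivAt_mode_of_dbar (contDiff_infty.1 hsmooth 1) hper m s
    rw [mode_modeSeries hc.rapidDecay] at hderiv_mode
    exact add_left_cancel (hderiv_mode.unique (hderiv m s))
  rw [← hmode]
  exact (modeSeries_mode ((contDiff_dbar hsmooth).const_smul (2 : ℝ))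
    (hper.dbar.const_smul (2 : ℝ))).symm

end ModeSeries

section CylinderEnergy

variable {E F G : Type*} [NormedAddCommGroup E] [NormedAddCommGroup F] [NormedAddCommGroup G]
  {δ : ℝ}

/-- The squared `L²(e^{2δs} ds dt)`-norm over the fundamental domain `ℝ × [0, 1]` of the cylinder,
as an extended real. -/
def cylEnergy (δ : ℝ) (h : ℝ × ℝ → E) : ℝ≥0∞ :=
  ∫⁻ p in univ ×ˢ Icc (0 : ℝ) 1, ‖h p‖ₑ ^ 2 * ENNReal.ofReal (Real.exp (2 * δ * p.1))

lemma cylEnergy_congr_norm {f : ℝ × ℝ → E} {g : ℝ × ℝ → F} (hfg : ∀ p, ‖f p‖ = ‖g p‖) :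
    cylEnergy δ f = cylEnergy δ g := by
  simp only [cylEnergy, enorm_sq_eq_ofReal, hfg]

lemma cylEnergy_mono {f : ℝ × ℝ → E} {g : ℝ × ℝ → F} (hfg : ∀ p, ‖f p‖ ≤ ‖g p‖) :
    cylEnergy δ f ≤ cylEnergy δ g := by
  refine lintegral_mono fun p ↦ ?_
  gcongr
  exact enorm_le_iff_norm_le.2 (hfg p)

lemma cylEnergy_const_smul {𝕜 : Type*} [NormedField 𝕜] [NormedSpace 𝕜 E] (δ : ℝ) (a : 𝕜)
    (h : ℝ × ℝ → E) : cylEnergy δ (a • h) = ‖a‖ₑ ^ 2 * cylEnergy δ h := by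
  rw [cylEnergy, cylEnergy, ← lintegral_const_mul' _ _ (by simp)]
  simp only [Pi.smul_apply, enorm_smul, mul_pow, mul_assoc]

lemma cylEnergy_le_of_norm_le_mul_add {h : ℝ × ℝ → E} {f : ℝ × ℝ → F} {g : ℝ × ℝ → G}
    (hf : Continuous f) {C : ℝ} (hC : ∀ p, ‖h p‖ ≤ C * (‖f p‖ + ‖g p‖)) :
    cylEnergy δ h ≤ ENNReal.ofReal (2 * C ^ 2) * (cylEnergy δ f + cylEnergy δ g) := by
  have hmeas : Measurable fun p : ℝ × ℝ ↦
      ‖f p‖ₑ ^ 2 * ENNReal.ofReal (Real.exp (2 * δ * p.1)) := by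
    have := hf.enorm.measurable
    fun_prop
  rw [cylEnergy, cylEnergy, cylEnergy, ← lintegral_add_left hmeas,
    ← lintegral_const_mul' _ _ ENNReal.ofReal_ne_top]
  refine lintegral_mono fun p ↦ ?_
  have hsq : ‖h p‖ ^ 2 ≤ 2 * C ^ 2 * (‖f p‖ ^ 2 + ‖g p‖ ^ 2) :=
    calc ‖h p‖ ^ 2 ≤ (C * (‖f p‖ + ‖g p‖)) ^ 2 := by
          gcongr
          exact hC p
      _ = C ^ 2 * (‖f p‖ + ‖g p‖) ^ 2 := mul_pow _ _ _
      _ ≤ C ^ 2 * (2 * (‖f p‖ ^ 2 + ‖g p‖ ^ 2)) := by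
          gcongr
          exact add_sq_le
      _ = 2 * C ^ 2 * (‖f p‖ ^ 2 + ‖g p‖ ^ 2) := by ring
  rw [← add_mul, ← mul_assoc, enorm_sq_eq_ofReal, enorm_sq_eq_ofReal, enorm_sq_eq_ofReal,
    ← ENNReal.ofReal_add (by positivity) (by positivity),
    ← ENNReal.ofReal_mul (p := 2 * C ^ 2) (by positivity)]
  exact mul_le_mul_left (ENNReal.ofReal_le_ofReal hsq) _

lemma cylEnergy_eq_tsum_lineEnergy_mode (δ : ℝ) {h : ℝ × ℝ → ℂ} (hh : Continuous h) :
    cylEnergy δ h = ∑' m, lineEnergy δ (mode h m) := by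
  have := hh.measurable
  simp only [cylEnergy, lineEnergy]
  rw [Measure.volume_eq_prod, ← Measure.prod_restrict, Measure.restrict_univ,
    lintegral_prod _ (by fun_prop), ← lintegral_tsum fun m ↦ ?_]
  · refine lintegral_congr fun s ↦ ?_
    rw [ENNReal.tsum_mul_right, ← lintegral_enorm_sq_eq_tsum_mode hh]
    exact lintegral_mul_const' (ENNReal.ofReal (Real.exp (2 * δ * s))) (fun t ↦ ‖h (s, t)‖ₑ ^ 2)
      ENNReal.ofReal_ne_top
  · have := (continuous_mode hh m).measurable
    fun_prop

lemma cylEnergy_ne_top_of_integrableOn {h : ℝ × ℝ → E}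
    (hint : IntegrableOn (fun p : ℝ × ℝ ↦ ‖h p‖ ^ 2 * Real.exp (2 * δ * p.1))
      (univ ×ˢ Icc (0 : ℝ) 1)) : cylEnergy δ h ≠ ⊤ := by
  have hfin := hint.2
  rw [hasFiniteIntegral_iff_ofReal (Eventually.of_forall fun p ↦ by positivity)] at hfin
  simpa only [cylEnergy, enorm_sq_eq_ofReal, ENNReal.ofReal_mul (sq_nonneg _)] using hfin.ne

end CylinderEnergy

section ExistenceUniqueness

variable {δ : ℝ}

lemma eq_zero_of_dbar_eq_zero_of_cylEnergy_ne_top {h : ℝ × ℝ → ℂ} (hh : ContDiff ℝ 1 h)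
    (hper : PeriodicSnd h) (hdbar : dbar h = 0) (hfin : cylEnergy δ h ≠ ⊤) : h = 0 := by
  have hmode (m : ℤ) : mode h m = 0 := by
    refine eq_zero_of_hasDerivAt_smul_of_lineEnergy_ne_top (δ := δ) (μ := 2 * π * m) (fun s ↦ ?_) ?_
    · have hderiv := hasDerivAt_mode_of_dbar hh hper m s
      rwa [hdbar, smul_zero, show mode 0 m s = (0 : ℂ) by simp [mode], add_zero] at hderiv
    · rw [cylEnergy_eq_tsum_lineEnergy_mode δ hh.continuous] at hfin
      exact ENNReal.ne_top_of_tsum_ne_top hfin m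
  ext ⟨s, t⟩
  have hsum := hasSum_fourier_smul_mode hh.continuous hper (s := s) (by simp [hmode]) t
  simp only [hmode, Pi.zero_apply, smul_zero] at hsum
  exact hsum.unique hasSum_zero

lemma eq_of_dbar_eq_of_cylEnergy_ne_top {u v : ℝ × ℝ → ℂ} (hu : ContDiff ℝ 1 u)
    (hv : ContDiff ℝ 1 v) (huper : PeriodicSnd u) (hvper : PeriodicSnd v) (hdbar : dbar u = dbar v)
    (hufin : cylEnergy δ u ≠ ⊤) (hvfin : cylEnergy δ v ≠ ⊤) : u = v := by
  have hfin : cylEnergy δ (u - v) ≠ ⊤ := ne_top_of_le_ne_top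
    (ENNReal.mul_ne_top ENNReal.ofReal_ne_top (ENNReal.add_ne_top.2 ⟨hufin, hvfin⟩))
    (cylEnergy_le_of_norm_le_mul_add hu.continuous (C := 1) fun p ↦ by
      simpa using norm_sub_le (u p) (v p))
  refine sub_eq_zero.1 (eq_zero_of_dbar_eq_zero_of_cylEnergy_ne_top (hu.sub hv)
    (huper.sub hvper) ?_ hfin)
  rw [dbar_sub (hu.differentiable (by simp)) (hv.differentiable (by simp)), hdbar, sub_self]

lemma exists_forall_one_add_sq_div_sq_le (hδ : ∀ m : ℤ, δ ≠ 2 * π * m) :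
    ∃ K : ℝ, ∀ m : ℤ, (1 + (2 * π * m) ^ 2) * (1 / (δ + 2 * π * m) ^ 2) ≤ K := by
  obtain ⟨γ, hγ, hgap⟩ := exists_pos_forall_le_abs_add_two_pi_mul hδ
  refine ⟨2 + (1 + 2 * δ ^ 2) / γ ^ 2, fun m ↦ ?_⟩
  have hsq : γ ^ 2 ≤ (δ + 2 * π * m) ^ 2 := by
    rw [← sq_abs (δ + _)]
    exact pow_le_pow_left₀ hγ.le (hgap m) 2
  have hpos : 0 < (δ + 2 * π * m) ^ 2 := (pow_pos hγ 2).trans_le hsq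
  have hnum : 1 + (2 * π * m) ^ 2 ≤ 2 * (δ + 2 * π * m) ^ 2 + (1 + 2 * δ ^ 2) := by
    nlinarith [sq_nonneg (2 * δ + 2 * π * m)]
  calc (1 + (2 * π * m) ^ 2) * (1 / (δ + 2 * π * m) ^ 2)
      ≤ (2 * (δ + 2 * π * m) ^ 2 + (1 + 2 * δ ^ 2)) * (1 / (δ + 2 * π * m) ^ 2) :=
        mul_le_mul_of_nonneg_right hnum (by positivity)
    _ = 2 + (1 + 2 * δ ^ 2) / (δ + 2 * π * m) ^ 2 := by
        rw [mul_one_div, add_div, mul_div_cancel_right₀ _ hpos.ne']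
    _ ≤ 2 + (1 + 2 * δ ^ 2) / γ ^ 2 := by gcongr

lemma lineEnergy_add_lineEnergy_freqMul_le {E : Type*} [NormedAddCommGroup E] [NormedSpace ℂ E]
    {c F : ℤ → ℝ → E} {K : ℝ} (m : ℤ)
    (hK : (1 + (2 * π * m) ^ 2) * (1 / (δ + 2 * π * m) ^ 2) ≤ K)
    (hc : IsDecayingSolution δ (2 * π * m) (F m) (c m)) :
    lineEnergy δ (c m) + lineEnergy δ (freqMul c m) ≤ ENNReal.ofReal K * lineEnergy δ (F m) := by
  have hfreq : lineEnergy δ (freqMul c m) =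
      ENNReal.ofReal ((2 * π * m) ^ 2) * lineEnergy δ (c m) := by
    rw [show freqMul c m = fun s ↦ (2 * π * Complex.I * m : ℂ) • c m s from rfl,
      lineEnergy_const_smul, enorm_sq_eq_ofReal, norm_two_pi_I_mul_int, mul_pow, sq_abs, ← mul_pow]
  calc lineEnergy δ (c m) + lineEnergy δ (freqMul c m)
      = ENNReal.ofReal (1 + (2 * π * m) ^ 2) * lineEnergy δ (c m) := by
        rw [hfreq, ENNReal.ofReal_add zero_le_one (by positivity), ENNReal.ofReal_one, add_mul,
          one_mul]
    _ ≤ ENNReal.ofReal (1 + (2 * π * m) ^ 2) *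
          (ENNReal.ofReal (1 / (δ + 2 * π * m) ^ 2) * lineEnergy δ (F m)) := by
        gcongr
        exact hc.lineEnergy_le
    _ ≤ ENNReal.ofReal K * lineEnergy δ (F m) := by
        rw [← mul_assoc, ← ENNReal.ofReal_mul (by positivity)]
        gcongr

lemma exists_smoothRapidDecay_isDecayingSolution_mode (hδ : ∀ m : ℤ, δ ≠ 2 * π * m)
    {g : ℝ × ℝ → ℂ} (hg : ContDiff ℝ ∞ g) (hper : PeriodicSnd g) (hfin : cylEnergy δ g ≠ ⊤) :
    ∃ c : ℤ → ℝ → ℂ, SmoothRapidDecay c ∧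
      ∀ m : ℤ, IsDecayingSolution δ (2 * π * m) (mode g m) (c m) := by
  have hle (m : ℤ) : lineEnergy δ (mode g m) ≤ cylEnergy δ g := by
    rw [cylEnergy_eq_tsum_lineEnergy_mode δ hg.continuous]
    exact ENNReal.le_tsum m
  have hne (m : ℤ) : δ + 2 * π * m ≠ 0 := fun h ↦ hδ (-m) (by push_cast; linarith)
  choose c hc using fun m ↦ exists_isDecayingSolution (hne m) (continuous_mode hg.continuous m)
    (ne_top_of_le_ne_top hfin (hle m))
  have hdecay : RapidDecay c := rapidDecay_of_isDecayingSolution hδ (rapidDecay_mode hg hper)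
    (fun m ↦ ENNReal.toReal_mono hfin (hle m)) hc
  have hfreq (m : ℤ) : ‖2 * π * (m : ℝ)‖ ≤ 2 * π * (1 + |(m : ℝ)|) := by
    rw [norm_mul, Real.norm_of_nonneg Real.two_pi_pos.le, Real.norm_eq_abs]
    gcongr
    linarith
  exact ⟨c, (smoothRapidDecay_mode hg hper).of_hasDerivAt hdecay hfreq fun m ↦ (hc m).hasDerivAt,
    hc⟩

lemma exists_dbar_eq_cylEnergy_le (hδ : ∀ m : ℤ, δ ≠ 2 * π * m) :
    ∃ K : ℝ≥0∞, K ≠ ⊤ ∧ ∀ f : ℝ × ℝ → ℂ, ContDiff ℝ ∞ f → PeriodicSnd f → cylEnergy δ f ≠ ⊤ →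
      ∃ u : ℝ × ℝ → ℂ, ContDiff ℝ ∞ u ∧ PeriodicSnd u ∧ dbar u = f ∧
        cylEnergy δ u + cylEnergy δ (pdT u) ≤ K * cylEnergy δ f := by
  obtain ⟨K, hK⟩ := exists_forall_one_add_sq_div_sq_le hδ
  refine ⟨ENNReal.ofReal K * 4, by finiteness, fun f hf hper hfin ↦ ?_⟩
  set g : ℝ × ℝ → ℂ := (2 : ℝ) • f
  have hg : ContDiff ℝ ∞ g := hf.const_smul (2 : ℝ)
  have hgper : PeriodicSnd g := hper.const_smul (2 : ℝ)
  have hgE : cylEnergy δ g = 4 * cylEnergy δ f := by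
    rw [cylEnergy_const_smul, enorm_sq_eq_ofReal]
    norm_num
  obtain ⟨c, hsmooth, hc⟩ := exists_smoothRapidDecay_isDecayingSolution_mode hδ hg hgper
    (by rw [hgE]; finiteness)
  have hu := hsmooth.contDiff_modeSeries
  have huper := periodicSnd_modeSeries c
  refine ⟨modeSeries c, hu, huper, ?_, ?_⟩
  · have htwo := two_smul_dbar_modeSeries hsmooth fun m ↦ (hc m).hasDerivAt
    rw [modeSeries_mode hg hgper] at htwo
    exact smul_right_injective _ (two_ne_zero (α := ℝ)) htwo
  · rw [mul_assoc, ← hgE, cylEnergy_eq_tsum_lineEnergy_mode δ hu.continuous,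
      cylEnergy_eq_tsum_lineEnergy_mode δ (contDiff_pdT hu).continuous,
      cylEnergy_eq_tsum_lineEnergy_mode δ hg.continuous, mode_pdT (contDiff_infty.1 hu 1) huper,
      mode_modeSeries hsmooth.rapidDecay, ← ENNReal.tsum_add, ← ENNReal.tsum_mul_left]
    exact ENNReal.tsum_le_tsum fun m ↦ lineEnergy_add_lineEnergy_freqMul_le m (hK m) (hc m)

end ExistenceUniqueness

section SobolevEnergy

/-- The squared weighted Sobolev norm `N_k(h)²` as an extended real, which avoids integrability
side conditions; `wN_eq_sqrt_sobolevEnergy` relates it to `wN`. -/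
def sobolevEnergy {E : Type*} [NormedAddCommGroup E] [NormedSpace ℝ E] (δ : ℝ) (k : ℕ)
    (h : ℝ × ℝ → E) : ℝ≥0∞ :=
  ∑ j ∈ Finset.range (k + 1), cylEnergy δ (iteratedFDeriv ℝ j h)

section Basic

variable {E : Type*} [NormedAddCommGroup E] [NormedSpace ℝ E] {δ : ℝ} {k : ℕ} {h : ℝ × ℝ → E}

lemma sobolevEnergy_zero : sobolevEnergy δ 0 h = cylEnergy δ h := by
  rw [sobolevEnergy, zero_add, Finset.sum_range_one]
  exact cylEnergy_congr_norm fun p ↦ norm_iteratedFDeriv_zero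

lemma sobolevEnergy_mono {l : ℕ} (hkl : k ≤ l) : sobolevEnergy δ k h ≤ sobolevEnergy δ l h :=
  Finset.sum_le_sum_of_subset (Finset.range_mono (by lia))

lemma cylEnergy_le_sobolevEnergy : cylEnergy δ h ≤ sobolevEnergy δ k h :=
  sobolevEnergy_zero.symm.trans_le (sobolevEnergy_mono k.zero_le)

lemma cylEnergy_iteratedFDeriv_le_sobolevEnergy :
    cylEnergy δ (iteratedFDeriv ℝ k h) ≤ sobolevEnergy δ k h :=
  Finset.single_le_sum (f := fun j ↦ cylEnergy δ (iteratedFDeriv ℝ j h)) (fun _ _ ↦ zero_le)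
    (Finset.self_mem_range_succ k)

lemma sobolevEnergy_pdT_le (hh : ContDiff ℝ ∞ h) :
    sobolevEnergy δ k (pdT h) ≤ sobolevEnergy δ (k + 1) h := by
  rw [sobolevEnergy, sobolevEnergy, Finset.sum_range_succ' _ (k + 1)]
  exact le_add_right (Finset.sum_le_sum fun j _ ↦
    cylEnergy_mono (norm_iteratedFDeriv_pdT_le hh j))

lemma continuous_sobolev_density (hh : ContDiff ℝ k h) :
    Continuous fun p : ℝ × ℝ ↦
      (∑ j ∈ Finset.range (k + 1), ‖iteratedFDeriv ℝ j h p‖ ^ 2) * Real.exp (2 * δ * p.1) := by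
  refine (continuous_finsetSum _ fun j hj ↦ ?_).mul (by fun_prop)
  have hjk : j ≤ k := Finset.mem_range_succ_iff.1 hj
  exact (hh.continuous_iteratedFDeriv (by exact_mod_cast hjk)).norm.pow 2

lemma sobolevEnergy_eq_lintegral (hh : ContDiff ℝ k h) :
    sobolevEnergy δ k h = ∫⁻ p in univ ×ˢ Icc (0 : ℝ) 1, ENNReal.ofReal
      ((∑ j ∈ Finset.range (k + 1), ‖iteratedFDeriv ℝ j h p‖ ^ 2) * Real.exp (2 * δ * p.1)) := by
  simp only [sobolevEnergy, cylEnergy]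
  rw [← lintegral_finsetSum _ fun j hj ↦ ?_]
  · refine lintegral_congr fun p ↦ ?_
    rw [ENNReal.ofReal_mul (by positivity), ENNReal.ofReal_sum_of_nonneg fun _ _ ↦ by positivity,
      Finset.sum_mul]
    simp only [enorm_sq_eq_ofReal]
  · have hjk : j ≤ k := Finset.mem_range_succ_iff.1 hj
    have := (hh.continuous_iteratedFDeriv (by exact_mod_cast hjk)).enorm.measurable
    fun_prop

lemma integrableOn_sobolev_density_iff (hh : ContDiff ℝ k h) :
    IntegrableOn (fun p : ℝ × ℝ ↦
        (∑ j ∈ Finset.range (k + 1), ‖iteratedFDeriv ℝ j h p‖ ^ 2) * Real.exp (2 * δ * p.1))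
      (univ ×ˢ Icc (0 : ℝ) 1) ↔ sobolevEnergy δ k h ≠ ⊤ := by
  rw [sobolevEnergy_eq_lintegral hh, ← lt_top_iff_ne_top, IntegrableOn, Integrable,
    hasFiniteIntegral_iff_ofReal (Eventually.of_forall fun p ↦ by positivity)]
  exact and_iff_right (continuous_sobolev_density hh).aestronglyMeasurable

end Basic

variable {δ : ℝ} {k : ℕ} {f u : ℝ × ℝ → ℂ}

lemma wN_eq_sqrt_sobolevEnergy (hf : ContDiff ℝ k f) :
    wN k δ f = √(sobolevEnergy δ k f).toReal := by
  rw [wN, sobolevEnergy_eq_lintegral hf,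
    integral_eq_lintegral_of_nonneg_ae (Eventually.of_forall fun p ↦ by positivity)
      (continuous_sobolev_density hf).aestronglyMeasurable]

lemma sobolevEnergy_succ_le (hu : ContDiff ℝ ∞ u) :
    sobolevEnergy δ (k + 1) u ≤
      sobolevEnergy δ k u + 8 * (sobolevEnergy δ k (dbar u) + sobolevEnergy δ k (pdT u)) := by
  have hcont : Continuous (iteratedFDeriv ℝ k (dbar u)) :=
    (contDiff_dbar hu).continuous_iteratedFDeriv (by exact_mod_cast le_top)
  have htop : cylEnergy δ (iteratedFDeriv ℝ (k + 1) u) ≤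
      8 * (cylEnergy δ (iteratedFDeriv ℝ k (dbar u)) + cylEnergy δ (iteratedFDeriv ℝ k (pdT u))) :=
    (cylEnergy_le_of_norm_le_mul_add hcont (norm_iteratedFDeriv_succ_le_dbar hu k)).trans_eq
      (by norm_num)
  rw [sobolevEnergy, Finset.sum_range_succ]
  refine add_le_add_right (htop.trans ?_) _
  gcongr <;> exact cylEnergy_iteratedFDeriv_le_sobolevEnergy

lemma exists_cylEnergy_add_cylEnergy_pdT_le (hδ : ∀ m : ℤ, δ ≠ 2 * π * m) :
    ∃ K : ℝ≥0∞, K ≠ ⊤ ∧ ∀ u : ℝ × ℝ → ℂ, ContDiff ℝ ∞ u → PeriodicSnd u → cylEnergy δ u ≠ ⊤ →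
      cylEnergy δ (dbar u) ≠ ⊤ →
        cylEnergy δ u + cylEnergy δ (pdT u) ≤ K * cylEnergy δ (dbar u) := by
  obtain ⟨K, hK, hsolve⟩ := exists_dbar_eq_cylEnergy_le hδ
  refine ⟨K, hK, fun u hu huper hufin hfin ↦ ?_⟩
  obtain ⟨v, hv, hvper, hvu, hle⟩ := hsolve (dbar u) (contDiff_dbar hu) huper.dbar hfin
  have hvfin : cylEnergy δ v ≠ ⊤ :=
    ne_top_of_le_ne_top (ENNReal.mul_ne_top hK hfin) (le_self_add.trans hle)
  obtain rfl : v = u := eq_of_dbar_eq_of_cylEnergy_ne_top (contDiff_infty.1 hv 1)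
    (contDiff_infty.1 hu 1) hvper huper hvu hvfin hufin
  exact hle

lemma exists_sobolevEnergy_one_le_dbar (hδ : ∀ m : ℤ, δ ≠ 2 * π * m) :
    ∃ K : ℝ≥0∞, K ≠ ⊤ ∧ ∀ u : ℝ × ℝ → ℂ, ContDiff ℝ ∞ u → PeriodicSnd u → cylEnergy δ u ≠ ⊤ →
      cylEnergy δ (dbar u) ≠ ⊤ → sobolevEnergy δ 1 u ≤ K * cylEnergy δ (dbar u) := by
  obtain ⟨K, hK, hbound⟩ := exists_cylEnergy_add_cylEnergy_pdT_le hδ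
  refine ⟨8 + 8 * K, by finiteness, fun u hu huper hufin hfin ↦ ?_⟩
  calc sobolevEnergy δ 1 u
      ≤ cylEnergy δ u + 8 * (cylEnergy δ (dbar u) + cylEnergy δ (pdT u)) := by
        simpa only [sobolevEnergy_zero] using sobolevEnergy_succ_le (δ := δ) (k := 0) hu
    _ ≤ 8 * cylEnergy δ (dbar u) + 8 * (cylEnergy δ u + cylEnergy δ (pdT u)) := by
        rw [mul_add, mul_add, add_left_comm]
        gcongr
        exact le_mul_of_one_le_left zero_le (by norm_num)
    _ ≤ 8 * cylEnergy δ (dbar u) + 8 * (K * cylEnergy δ (dbar u)) := by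
        gcongr
        exact hbound u hu huper hufin hfin
    _ = (8 + 8 * K) * cylEnergy δ (dbar u) := by rw [add_mul, mul_assoc]

lemma exists_sobolevEnergy_succ_le_dbar (hδ : ∀ m : ℤ, δ ≠ 2 * π * m) (k : ℕ) :
    ∃ K : ℝ≥0∞, K ≠ ⊤ ∧ ∀ u : ℝ × ℝ → ℂ, ContDiff ℝ ∞ u → PeriodicSnd u → cylEnergy δ u ≠ ⊤ →
      sobolevEnergy δ k (dbar u) ≠ ⊤ →
        sobolevEnergy δ (k + 1) u ≤ K * sobolevEnergy δ k (dbar u) := by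
  induction k with
  | zero => simpa only [sobolevEnergy_zero] using exists_sobolevEnergy_one_le_dbar hδ
  | succ k ih =>
    obtain ⟨K, hK, hbound⟩ := ih
    refine ⟨K + 8 * (1 + K), by finiteness, fun u hu huper hufin hfin ↦ ?_⟩
    set Q := sobolevEnergy δ (k + 1) (dbar u)
    have hQ : sobolevEnergy δ k (dbar u) ≤ Q := sobolevEnergy_mono k.le_succ
    have hQT : sobolevEnergy δ k (dbar (pdT u)) ≤ Q := by
      rw [dbar_pdT (contDiff_infty.1 hu 2)]
      exact sobolevEnergy_pdT_le (contDiff_dbar hu)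
    have hbase : sobolevEnergy δ (k + 1) u ≤ K * Q :=
      (hbound u hu huper hufin (ne_top_of_le_ne_top hfin hQ)).trans (by gcongr)
    have hTfin : cylEnergy δ (pdT u) ≠ ⊤ := ne_top_of_le_ne_top (ENNReal.mul_ne_top hK hfin)
      (cylEnergy_le_sobolevEnergy.trans ((sobolevEnergy_pdT_le hu).trans hbase))
    have hT : sobolevEnergy δ (k + 1) (pdT u) ≤ K * Q :=
      (hbound (pdT u) (contDiff_pdT hu) huper.pdT hTfin (ne_top_of_le_ne_top hfin hQT)).trans
        (by gcongr)
    calc sobolevEnergy δ (k + 2) u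
        ≤ sobolevEnergy δ (k + 1) u + 8 * (Q + sobolevEnergy δ (k + 1) (pdT u)) :=
          sobolevEnergy_succ_le hu
      _ ≤ K * Q + 8 * (Q + K * Q) := by gcongr
      _ = (K + 8 * (1 + K)) * Q := by ring

lemma exists_dbar_eq_sobolevEnergy_le (hδ : ∀ m : ℤ, δ ≠ 2 * π * m) (k : ℕ) :
    ∃ K : ℝ≥0∞, K ≠ ⊤ ∧ ∀ f : ℝ × ℝ → ℂ, ContDiff ℝ ∞ f → PeriodicSnd f →
      sobolevEnergy δ k f ≠ ⊤ → ∃ u : ℝ × ℝ → ℂ, ContDiff ℝ ∞ u ∧ PeriodicSnd u ∧ dbar u = f ∧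
        sobolevEnergy δ (k + 1) u ≤ K * sobolevEnergy δ k f := by
  obtain ⟨K₀, hK₀, hsolve⟩ := exists_dbar_eq_cylEnergy_le hδ
  obtain ⟨K, hK, hbound⟩ := exists_sobolevEnergy_succ_le_dbar hδ k
  refine ⟨K, hK, fun f hf hper hfin ↦ ?_⟩
  have hfin₀ : cylEnergy δ f ≠ ⊤ := ne_top_of_le_ne_top hfin cylEnergy_le_sobolevEnergy
  obtain ⟨u, hu, huper, rfl, hle⟩ := hsolve f hf hper hfin₀
  have hufin : cylEnergy δ u ≠ ⊤ :=
    ne_top_of_le_ne_top (ENNReal.mul_ne_top hK₀ hfin₀) (le_self_add.trans hle)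
  exact ⟨u, hu, huper, rfl, hbound u hu huper hufin hfin⟩

lemma wN_le_of_sobolevEnergy_le {l : ℕ} {K : ℝ≥0∞} (hK : K ≠ ⊤) (hu : ContDiff ℝ l u)
    (hf : ContDiff ℝ k f) (hfin : sobolevEnergy δ k f ≠ ⊤)
    (hle : sobolevEnergy δ l u ≤ K * sobolevEnergy δ k f) :
    wN l δ u ≤ √K.toReal * wN k δ f := by
  rw [wN_eq_sqrt_sobolevEnergy hu, wN_eq_sqrt_sobolevEnergy hf,
    ← Real.sqrt_mul ENNReal.toReal_nonneg, ← ENNReal.toReal_mul]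
  exact Real.sqrt_le_sqrt (ENNReal.toReal_mono (ENNReal.mul_ne_top hK hfin) hle)

end SobolevEnergy

theorem stmt_11_general (k : ℕ) (δ : ℝ) :
    ((∀ m : ℤ, δ ≠ 2 * π * m) →
      ∃ C > 0, ∀ f : ℝ × ℝ → ℂ, ContDiff ℝ ∞ f → (∀ s t : ℝ, f (s, t + 1) = f (s, t)) →
        IntegrableOn
          (fun p : ℝ × ℝ ↦
            (∑ j ∈ Finset.range (k + 1), ‖iteratedFDeriv ℝ j f p‖ ^ 2) * Real.exp (2 * δ * p.1))
          (univ ×ˢ Icc (0 : ℝ) 1) →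
        ∃ u : ℝ × ℝ → ℂ, ContDiff ℝ ∞ u ∧ (∀ s t : ℝ, u (s, t + 1) = u (s, t)) ∧
          (∀ p : ℝ × ℝ, dbar u p = f p) ∧
          IntegrableOn
            (fun p : ℝ × ℝ ↦
              (∑ j ∈ Finset.range (k + 2), ‖iteratedFDeriv ℝ j u p‖ ^ 2) * Real.exp (2 * δ * p.1))
            (univ ×ˢ Icc (0 : ℝ) 1) ∧
          wN (k + 1) δ u ≤ C * wN k δ f) ∧
    ∀ u₁ u₂ : ℝ × ℝ → ℂ, ContDiff ℝ 1 u₁ → ContDiff ℝ 1 u₂ →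
      (∀ s t : ℝ, u₁ (s, t + 1) = u₁ (s, t)) → (∀ s t : ℝ, u₂ (s, t + 1) = u₂ (s, t)) →
      (∀ p : ℝ × ℝ, dbar u₁ p = dbar u₂ p) →
      IntegrableOn (fun p : ℝ × ℝ ↦ ‖u₁ p‖ ^ 2 * Real.exp (2 * δ * p.1))
        (univ ×ˢ Icc (0 : ℝ) 1) →
      IntegrableOn (fun p : ℝ × ℝ ↦ ‖u₂ p‖ ^ 2 * Real.exp (2 * δ * p.1))
        (univ ×ˢ Icc (0 : ℝ) 1) →
      u₁ = u₂ := by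
  refine ⟨fun hδ ↦ ?_, fun u₁ u₂ hu₁ hu₂ hper₁ hper₂ hdbar hint₁ hint₂ ↦ ?_⟩
  · obtain ⟨K, hK, hsolve⟩ := exists_dbar_eq_sobolevEnergy_le hδ k
    refine ⟨√K.toReal + 1, by positivity, fun f hf hper hint ↦ ?_⟩
    have hfk := contDiff_infty.1 hf k
    have hfin := (integrableOn_sobolev_density_iff hfk).1 hint
    obtain ⟨u, hu, huper, hdbar, hle⟩ := hsolve f hf hper hfin
    have huk := contDiff_infty.1 hu (k + 1)
    refine ⟨u, hu, huper, congrFun hdbar, (integrableOn_sobolev_density_iff huk).2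
      (ne_top_of_le_ne_top (ENNReal.mul_ne_top hK hfin) hle), ?_⟩
    calc wN (k + 1) δ u ≤ √K.toReal * wN k δ f := wN_le_of_sobolevEnergy_le hK huk hfk hfin hle
      _ ≤ (√K.toReal + 1) * wN k δ f :=
          mul_le_mul_of_nonneg_right (by linarith) (Real.sqrt_nonneg _)
  · exact eq_of_dbar_eq_of_cylEnergy_ne_top hu₁ hu₂ hper₁ hper₂ (funext hdbar)
      (cylEnergy_ne_top_of_integrableOn hint₁) (cylEnergy_ne_top_of_integrableOn hint₂)

theorem stmt_11 (k : ℕ) (δ : ℝ) (hδ : 0 < δ) (hδZ : ∀ m : ℤ, δ ≠ 2 * π * m) :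
    -- existence with estimate
    (∃ C > 0, ∀ f : ℝ × ℝ → ℂ, ContDiff ℝ (⊤ : ℕ∞) f → (∀ s t : ℝ, f (s, t + 1) = f (s, t)) →
      IntegrableOn
        (fun p : ℝ × ℝ =>
          (∑ j ∈ Finset.range (k + 1), ‖iteratedFDeriv ℝ j f p‖ ^ 2) * Real.exp (2 * δ * p.1))
        ((univ : Set ℝ) ×ˢ Icc (0:ℝ) 1) →
      ∃ u : ℝ × ℝ → ℂ, ContDiff ℝ (⊤ : ℕ∞) u ∧ (∀ s t : ℝ, u (s, t + 1) = u (s, t)) ∧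
        (∀ p : ℝ × ℝ, dbar u p = f p) ∧
        IntegrableOn
          (fun p : ℝ × ℝ =>
            (∑ j ∈ Finset.range (k + 2), ‖iteratedFDeriv ℝ j u p‖ ^ 2) * Real.exp (2 * δ * p.1))
          ((univ : Set ℝ) ×ˢ Icc (0:ℝ) 1) ∧
        wN (k + 1) δ u ≤ C * wN k δ f) ∧
    -- uniqueness
    (∀ u₁ u₂ : ℝ × ℝ → ℂ, ContDiff ℝ 1 u₁ → ContDiff ℝ 1 u₂ →
      (∀ s t : ℝ, u₁ (s, t + 1) = u₁ (s, t)) → (∀ s t : ℝ, u₂ (s, t + 1) = u₂ (s, t)) →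
      (∀ p : ℝ × ℝ, dbar u₁ p = dbar u₂ p) →
      IntegrableOn (fun p : ℝ × ℝ => ‖u₁ p‖ ^ 2 * Real.exp (2 * δ * p.1))
        ((univ : Set ℝ) ×ˢ Icc (0:ℝ) 1) →
      IntegrableOn (fun p : ℝ × ℝ => ‖u₂ p‖ ^ 2 * Real.exp (2 * δ * p.1))
        ((univ : Set ℝ) ×ˢ Icc (0:ℝ) 1) →
      u₁ = u₂) :=
  ⟨(stmt_11_general k δ).1 hδZ, (stmt_11_general k δ).2⟩
end
end

section
/- Let n ≥ 1 and let J₀ and J be real 2n×2n matrices such that J₀² = −Id, J² = −Id, J₀ᵀ = −J₀, and A := −J₀·J is symmetric and positive definite. Let A^{1/2} denote the unique symmetric positive definite square root of A and set U := (A^{1/2})^{−1}. Then U is symmetric positive definite and U^{−1}·J·U = J₀. (Paper's Lemma 7.1, algebraic part, following Hofer–Wysocki–Zehnder: the normalized square root of −J₀J conjugates a compatible complex structure J to the reference complex structure J₀.) -/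
open Matrix

noncomputable section

/-!
Since `J₀ = B²J` and `J₀² = J² = -1`, the matrix `J` intertwines `B²` and `B⁻²`. Intertwining passes
to positive semidefinite square roots, so `BJ = JB⁻¹` and `BJB⁻¹ = JB⁻² = B²J = J₀`.

If `B²X = XC²`, then `Y = BX - XC` solves `BY + YC = 0`. Multiplying by `Yᴴ` and taking traces, the
nonnegative numbers `tr (YᴴBY)` and `tr (YCYᴴ)` add up to zero, so `BY = 0` and `YC = 0`; expanding
one factor of `YᴴY` then gives `tr (YᴴY) = 0`.
-/

section Intertwining

open scoped ComplexOrder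

variable {m p 𝕜 : Type*} [Fintype m] [Fintype p] [RCLike 𝕜]

theorem trace_conjTranspose_mul_mul_eq_zero_iff_of_posSemidef {B : Matrix m m 𝕜} (hB : B.PosSemidef)
    (Y : Matrix m p 𝕜) : (Yᴴ * B * Y).trace = 0 ↔ B * Y = 0 := by
  classical
  rw [(hB.conjTranspose_mul_mul_same Y).trace_eq_zero_iff]
  refine ⟨fun h ↦ ?_, fun h ↦ by rw [Matrix.mul_assoc, h, Matrix.mul_zero]⟩
  refine ext_of_mulVec_single fun j ↦ ?_
  have hquad : star (Y *ᵥ Pi.single j 1) ⬝ᵥ B *ᵥ (Y *ᵥ Pi.single j 1) = 0 := by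
    rw [star_mulVec, ← dotProduct_mulVec, mulVec_mulVec, mulVec_mulVec, h,
      zero_mulVec, dotProduct_zero]
  rw [← mulVec_mulVec, (hB.dotProduct_mulVec_zero_iff _).mp hquad, zero_mulVec]

theorem mul_eq_zero_of_mul_add_mul_eq_zero_of_posSemidef {B : Matrix m m 𝕜} {C : Matrix p p 𝕜}
    (hB : B.PosSemidef) (hC : C.PosSemidef) {Y : Matrix m p 𝕜} (h : B * Y + Y * C = 0) :
    B * Y = 0 := by
  rw [← trace_conjTranspose_mul_mul_eq_zero_iff_of_posSemidef hB]
  have htrace : (Yᴴ * B * Y).trace = -(Y * C * Yᴴ).trace := by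
    rw [Matrix.mul_assoc, eq_neg_of_add_eq_zero_left h, Matrix.mul_neg, trace_neg, trace_mul_comm]
  refine le_antisymm ?_ (hB.conjTranspose_mul_mul_same Y).trace_nonneg
  rw [htrace]
  exact neg_nonpos.mpr (hC.mul_mul_conjTranspose_same Y).trace_nonneg

theorem mul_eq_mul_of_mul_self_mul_eq_of_posSemidef {B : Matrix m m 𝕜} {C : Matrix p p 𝕜}
    (hB : B.PosSemidef) (hC : C.PosSemidef) {X : Matrix m p 𝕜} (h : B * B * X = X * (C * C)) :
    B * X = X * C := by
  set Y := B * X - X * C with hY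
  have hsylvester : B * Y + Y * C = 0 := by
    rw [hY, Matrix.mul_sub, Matrix.sub_mul, ← Matrix.mul_assoc, h]
    simp only [Matrix.mul_assoc, sub_add_sub_cancel, sub_self]
  have hBY : B * Y = 0 := mul_eq_zero_of_mul_add_mul_eq_zero_of_posSemidef hB hC hsylvester
  have hYC : Y * C = 0 := by rwa [hBY, zero_add] at hsylvester
  have hYstar : Yᴴ = Xᴴ * B - C * Xᴴ := by
    rw [hY, conjTranspose_sub, conjTranspose_mul, conjTranspose_mul, hB.isHermitian.eq,
      hC.isHermitian.eq]
  have htrace : (Yᴴ * Y).trace = 0 := by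
    calc (Yᴴ * Y).trace = (Xᴴ * (B * Y)).trace - (Xᴴ * (Y * C)).trace := by
          rw [hYstar, Matrix.sub_mul, trace_sub, Matrix.mul_assoc Xᴴ, Matrix.mul_assoc C,
            trace_mul_comm C, Matrix.mul_assoc Xᴴ]
      _ = 0 := by rw [hBY, hYC, Matrix.mul_zero, sub_self]
  exact sub_eq_zero.mp (trace_conjTranspose_mul_self_eq_zero_iff.mp htrace)

theorem stmt_12_general [DecidableEq m] {J₀ J B : Matrix m m 𝕜} (hJ₀sq : J₀ * J₀ = -1)
    (hJsq : J * J = -1) (hBpos : B.PosDef) (hBsq : B * B = -(J₀ * J)) :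
    B⁻¹.PosDef ∧ B * J * B⁻¹ = J₀ := by
  refine ⟨hBpos.inv, ?_⟩
  have hBinv : B * B⁻¹ = 1 := B.mul_nonsing_inv ((B.isUnit_iff_isUnit_det).mp hBpos.isUnit)
  have hJ₀ : B * B * J = J₀ := by
    rw [hBsq, neg_mul, mul_assoc, hJsq, mul_neg_one, neg_neg]
  have hJ : J₀ * (B * B) = J := by
    rw [hBsq, mul_neg, ← mul_assoc, hJ₀sq, neg_one_mul, neg_neg]
  have hsq : B * B * J = J * (B⁻¹ * B⁻¹) := by
    calc B * B * J = J₀ * (B * (B * B⁻¹) * B⁻¹) := by rw [hJ₀, hBinv, mul_one, hBinv, mul_one]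
      _ = J₀ * (B * B) * (B⁻¹ * B⁻¹) := by simp only [mul_assoc]
      _ = J * (B⁻¹ * B⁻¹) := by rw [hJ]
  have hintertwine : B * J = J * B⁻¹ :=
    mul_eq_mul_of_mul_self_mul_eq_of_posSemidef hBpos.posSemidef hBpos.inv.posSemidef hsq
  rw [hintertwine, mul_assoc, ← hsq, hJ₀]

end Intertwining

theorem stmt_12 (n : ℕ) (hn : 1 ≤ n)
    (J₀ J B : Matrix (Fin (2 * n)) (Fin (2 * n)) ℝ)
    (hJ₀sq : J₀ * J₀ = -1) (hJsq : J * J = -1) (hJ₀t : J₀ᵀ = -J₀)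
    (hA : (-(J₀ * J)).PosDef)
    -- B is the unique symmetric positive definite square root of A = −J₀·J,
    -- and U := B⁻¹
    (hBpos : B.PosDef) (hBsq : B * B = -(J₀ * J)) :
    (B⁻¹).PosDef ∧ B * J * B⁻¹ = J₀ :=
  stmt_12_general hJ₀sq hJsq hBpos hBsq
end
end
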